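/- Let n ≥ 2, N = 2ⁿ − 1, F the finite field with 2ⁿ elements, g a generator of F^×, ω = exp(2πi/N), and ψ_q ∈ ℂ^F given by ψ_q(0) = 0, ψ_q(g^j) = ω^{qj}/√N. Fix an 𝔽₂-linear bijection ι : 𝔽₂ⁿ → F and identify ℂ^F with (ℂ²)^{⊗n}. For any A ⊆ {0,…,n−1} with |A| = ℓ, let ρ_A be the reduced density matrix of ψ_q on A. Then for every integer q with q ≢ 0 (mod N), the von Neumann entropy satisfies S(ρ_A) ≥ ℓ ln 2 − 2^{4 + 2ℓ − n}. -/

import Mathlib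

open Complex

noncomputable section

/-- Combine a configuration on `A` and a configuration on `Aᶜ` into a full configuration. -/
def mergeCfg {ι : Type*} [DecidableEq ι] (A : Finset ι)
    (x : {i // i ∈ A} → ZMod 2) (y : {i // i ∉ A} → ZMod 2) : ι → ZMod 2 :=
  fun i => if h : i ∈ A then x ⟨i, h⟩ else y ⟨i, h⟩

/-- Reduced density matrix of a state `ψ` on the qubits in `A`. -/
def rdm {ι : Type*} [Fintype ι] [DecidableEq ι] (A : Finset ι)
    (ψ : (ι → ZMod 2) → ℂ) :
    Matrix ({i // i ∈ A} → ZMod 2) ({i // i ∈ A} → ZMod 2) ℂ :=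
  Matrix.of fun x x' => ∑ y : {i // i ∉ A} → ZMod 2,
    ψ (mergeCfg A x y) * (starRingEnd ℂ) (ψ (mergeCfg A x' y))

/-!
Up to the factor `1 / √N`, the state `ψ_q` is a nontrivial multiplicative character `χ` of `F`, so
the purity `tr ρ_A²` is a sum of squares of partial correlations of `χ` with itself. Expanding these
by Parseval over the characters of `𝔽₂^A` turns every off-diagonal contribution into a complete sum
`∑ z, χ (z + a) χ⁻¹(z) ψ(z)` with `ψ` an additive character, which has absolute value at most
`2 √|F|`. The purity is therefore within `O(2^ℓ / 2ⁿ)` of its minimum `2^{-ℓ}`, and since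
`ln t ≤ t - 1` the entropy is within `2^ℓ tr ρ_A² - 1` of its maximum `ℓ ln 2`.

The square-root bound is proved by Stepanov's method. The L-function of the sum is a polynomial of
degree at most two, with reciprocal roots `α`, `β`, so that the sum over the extension of degree `k`
is `-(α^k + β^k)`. It suffices to bound these sums by a constant multiple of `|F|^{k/2}` for even
`k`. There the substitution `t ↦ (1 + x^δ)⁻¹` with `χ^δ = 1` turns them into averages of sums
`∑ x, ψ(1 / (1 + b x^δ))`, that is, into a count of solutions of `Tr(c / (1 + b x^δ)) = 0`, and an
auxiliary polynomial of degree `|E| / 2 + O(√|E|)` vanishing at all solutions bounds this count by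
its degree.
-/

open Polynomial

section BivariateSubstitution

/-- The degree of `p : R[X][X]` in the inner variable is at most `d`. -/
def InnerDegreeLE {R : Type*} [Semiring R] (d : ℕ) (p : R[X][X]) : Prop :=
  ∀ j, (p.coeff j).natDegree ≤ d

namespace InnerDegreeLE

lemma C {R : Type*} [Semiring R] {d : ℕ} {p : R[X]} (hp : p.natDegree ≤ d) :
    InnerDegreeLE d (C p) := by
  intro j
  rw [coeff_C]
  split_ifs <;> simp [hp]

lemma map_C {R S : Type*} [Semiring R] [Semiring S] (f : S →+* R) (p : S[X]) :
    InnerDegreeLE 0 (p.map (Polynomial.C.comp f)) := by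
  intro j
  simp

lemma mono {R : Type*} [Semiring R] {d e : ℕ} {p : R[X][X]} (hp : InnerDegreeLE d p)
    (h : d ≤ e) : InnerDegreeLE e p :=
  fun j ↦ (hp j).trans h

lemma add {R : Type*} [Semiring R] {d : ℕ} {p q : R[X][X]} (hp : InnerDegreeLE d p)
    (hq : InnerDegreeLE d q) : InnerDegreeLE d (p + q) := by
  intro j
  rw [coeff_add]
  exact natDegree_add_le_of_degree_le (hp j) (hq j)

lemma sub {R : Type*} [Ring R] {d : ℕ} {p q : R[X][X]} (hp : InnerDegreeLE d p)
    (hq : InnerDegreeLE d q) : InnerDegreeLE d (p - q) := by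
  intro j
  rw [coeff_sub]
  exact natDegree_sub_le_of_le (hp j) (hq j) |>.trans_eq (max_self d)

lemma mul {R : Type*} [Semiring R] {d e : ℕ} {p q : R[X][X]} (hp : InnerDegreeLE d p)
    (hq : InnerDegreeLE e q) : InnerDegreeLE (d + e) (p * q) := by
  intro j
  rw [coeff_mul]
  exact natDegree_sum_le_of_forall_le _ _ fun x _ ↦
    natDegree_mul_le.trans (add_le_add (hp _) (hq _))

lemma of_map {R S : Type*} [Semiring R] [Semiring S] {f : R →+* S}
    (hf : Function.Injective f) {d : ℕ} {p : R[X][X]}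
    (hp : InnerDegreeLE d (p.map (mapRingHom f))) : InnerDegreeLE d p := by
  intro j
  simpa [natDegree_map_eq_of_injective hf] using hp j

lemma natDegree_eval_X_pow_le {R : Type*} [CommSemiring R] {d J : ℕ} {p : R[X][X]}
    (hp : InnerDegreeLE d p) (hJ : p.natDegree ≤ J) (r : ℕ) :
    (p.eval (X ^ r)).natDegree ≤ d + r * J := by
  rw [eval_eq_sum_range]
  refine natDegree_sum_le_of_forall_le _ _ fun j hj ↦ natDegree_mul_le.trans ?_
  rw [← pow_mul]
  exact add_le_add (hp j) ((natDegree_X_pow_le _).trans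
    (Nat.mul_le_mul_left r ((Finset.mem_range_succ_iff.mp hj).trans hJ)))

end InnerDegreeLE

lemma coeff_eval_X_pow {R : Type*} [CommSemiring R] {r : ℕ} {p : R[X][X]}
    (hp : ∀ j, (p.coeff j).natDegree < r) {i : ℕ} (hi : i < r) (j : ℕ) :
    (p.eval (X ^ r)).coeff (r * j + i) = (p.coeff j).coeff i := by
  rw [eval_eq_sum_range' (n := max (p.natDegree + 1) (j + 1)) (by omega), finsetSum_coeff,
    Finset.sum_eq_single j]
  · rw [← pow_mul, add_comm (r * j), coeff_mul_X_pow]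
  · intro k _ hk
    rw [← pow_mul, coeff_mul_X_pow']
    split_ifs with hle
    · have hkj : k < j :=
        lt_of_le_of_ne (Nat.lt_succ_iff.mp (lt_of_mul_lt_mul_left
          (hle.trans_lt (by rw [Nat.mul_succ]; omega)) r.zero_le)) hk
      have hmul : r * k + r ≤ r * j := Nat.mul_le_mul_left r hkj
      exact coeff_eq_zero_of_natDegree_lt ((hp k).trans_le (by omega))
    · rfl
  · intro hj
    exact absurd (Finset.mem_range.mpr (by omega)) hj

lemma eq_zero_of_eval_X_pow_eq_zero {R : Type*} [CommSemiring R] {r : ℕ} {p : R[X][X]}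
    (hp : ∀ j, (p.coeff j).natDegree < r) (h : p.eval (X ^ r) = 0) : p = 0 := by
  ext j i
  rcases lt_or_ge i r with hi | hi
  · rw [← coeff_eval_X_pow hp hi, h]
    simp
  · simpa using coeff_eq_zero_of_natDegree_lt ((hp j).trans_le hi)

/-- The substitution `p(x, y) ↦ p(X ^ r, X)`, where `x` is the inner variable of `p`. The
opposite substitution `p(X, X ^ r)` is `p.eval (X ^ r)`. -/
def evalInnerPow {R : Type*} [CommSemiring R] (r : ℕ) : R[X][X] →+* R[X] :=
  eval₂RingHom (expand R r : R[X] →+* R[X]) X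

-- `p(v, v ^ r) ^ r = p^σ(v ^ r, v ^ (r * r)) = p^σ(v ^ r, v)`, with `σ` the `r`-power Frobenius.
lemma eval_eval_X_pow_pow {R : Type*} [CommSemiring R] (ℓ m : ℕ) [ExpChar R ℓ] {v : R}
    (hv : v ^ (ℓ ^ m * ℓ ^ m) = v) (p : R[X][X]) :
    (p.eval (X ^ ℓ ^ m)).eval v ^ ℓ ^ m =
      (evalInnerPow (ℓ ^ m) (p.map (mapRingHom (iterateFrobenius R ℓ m)))).eval v := by
  have hom_eq : (iterateFrobenius R ℓ m).comp
        ((evalRingHom v).comp (evalRingHom (X ^ ℓ ^ m))) =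
      (evalRingHom v).comp ((evalInnerPow (ℓ ^ m)).comp
        (mapRingHom (mapRingHom (iterateFrobenius R ℓ m)))) := by
    apply ringHom_ext'
    · apply ringHom_ext'
      · ext x
        simp [evalInnerPow, -map_pow]
      · simp [evalInnerPow, iterateFrobenius_def]
    · simp [evalInnerPow, iterateFrobenius_def, ← pow_mul, hv]
  simpa [iterateFrobenius_def] using DFunLike.congr_fun hom_eq p

end BivariateSubstitution

section TruncatedTrace

/-- `∑ i < m, y ^ 2 ^ i`, the trace of `y` when `y` lies in the field with `2 ^ m` elements. -/
def truncatedTrace {R : Type*} [CommSemiring R] (m : ℕ) (y : R) : R :=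
  ∑ i ∈ Finset.range m, y ^ 2 ^ i

/-- The truncated trace of `c / D`, multiplied by `D ^ 2 ^ m` so as to be a polynomial expression in
`c` and `D`. -/
def homogeneousTrace {R : Type*} [CommSemiring R] (m : ℕ) (c D : R) : R :=
  ∑ i ∈ Finset.range m, c ^ 2 ^ i * D ^ (2 ^ m - 2 ^ i)

lemma map_homogeneousTrace {R S : Type*} [CommSemiring R] [CommSemiring S] (f : R →+* S) (m : ℕ)
    (c D : R) : f (homogeneousTrace m c D) = homogeneousTrace m (f c) (f D) := by
  simp [homogeneousTrace]

lemma homogeneousTrace_zero_right {R : Type*} [CommSemiring R] (m : ℕ) (c : R) :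
    homogeneousTrace m c 0 = 0 := by
  refine Finset.sum_eq_zero fun i hi ↦ ?_
  have : 2 ^ i < 2 ^ m := Nat.pow_lt_pow_right one_lt_two (Finset.mem_range.mp hi)
  rw [zero_pow (by omega), mul_zero]

lemma homogeneousTrace_eq_mul_truncatedTrace {K : Type*} [Semifield K] (m : ℕ) (c : K) {D : K}
    (hD : D ≠ 0) : homogeneousTrace m c D = D ^ 2 ^ m * truncatedTrace m (c * D⁻¹) := by
  rw [homogeneousTrace, truncatedTrace, Finset.mul_sum]
  refine Finset.sum_congr rfl fun i hi ↦ ?_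
  rw [pow_sub₀ D hD (Nat.pow_le_pow_right two_pos (Finset.mem_range_le hi)), mul_pow, inv_pow]
  ring

-- Both terms on the left are sums of `c ^ 2 ^ i * D ^ (2 * 2 ^ m - 2 ^ i)`, over `1 ≤ i ≤ m` and
-- `0 ≤ i < m` respectively.
lemma homogeneousTrace_sq_add {R : Type*} [CommRing R] [CharP R 2] (m : ℕ) (c D : R) :
    homogeneousTrace m c D ^ 2 + D ^ 2 ^ m * homogeneousTrace m c D =
      c ^ 2 ^ m * D ^ 2 ^ m + c * D ^ (2 * 2 ^ m - 1) := by
  set a : ℕ → R := fun i ↦ c ^ 2 ^ i * D ^ (2 * 2 ^ m - 2 ^ i) with ha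
  have sq_eq : homogeneousTrace m c D ^ 2 = ∑ i ∈ Finset.range m, a (i + 1) := by
    rw [homogeneousTrace, CharTwo.sum_sq]
    refine Finset.sum_congr rfl fun i _ ↦ ?_
    rw [mul_pow, ← pow_mul, ← pow_mul, ← pow_succ, Nat.sub_mul, ← pow_succ (n := i),
      mul_comm (2 ^ m)]
  have mul_eq : D ^ 2 ^ m * homogeneousTrace m c D = ∑ i ∈ Finset.range m, a i := by
    rw [homogeneousTrace, Finset.mul_sum]
    refine Finset.sum_congr rfl fun i hi ↦ ?_
    rw [mul_left_comm, ← pow_add, ← Nat.add_sub_assoc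
      (Nat.pow_le_pow_right two_pos (Finset.mem_range_le hi)), ← two_mul]
  rw [sq_eq, mul_eq, ← CharTwo.sub_eq_add, ← Finset.sum_sub_distrib, Finset.sum_range_sub,
    CharTwo.sub_eq_add]
  simp [ha, two_mul]

lemma natDegree_homogeneousTrace_le {R : Type*} [CommSemiring R] (m : ℕ) (c : R) (D : R[X]) :
    (homogeneousTrace m (C c) D).natDegree ≤ 2 ^ m * D.natDegree := by
  refine natDegree_sum_le_of_forall_le _ _ fun i _ ↦ ?_
  rw [← C_pow]
  exact (natDegree_C_mul_le _ _).trans (natDegree_pow_le_of_le _ le_rfl |>.trans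
    (Nat.mul_le_mul_right _ (Nat.sub_le _ _)))

end TruncatedTrace

section Nonvanishing

lemma eq_zero_of_forall_pow_dvd {R : Type*} [CommMonoidWithZero R] [IsCancelMulZero R]
    [WfDvdMonoid R] {p a : R} (hp : ¬ IsUnit p) (h : ∀ k : ℕ, p ^ k ∣ a) : a = 0 := by
  by_contra ha
  obtain ⟨k, hk⟩ := FiniteMultiplicity.of_not_isUnit hp ha
  exact hk (h _)

lemma exists_eq_mul_of_mul_add_mul_eq {R : Type*} [CommRing R] [IsDomain R] {p V W : R}
    (hp : Prime p) (hV : ¬ p ∣ V) (hW : ¬ p ∣ W) {A B : R}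
    (h : A * (A + B) * (p * W) = B ^ 2 * V) :
    ∃ A' B', A = p * A' ∧ B = p * B' ∧ A' * (A' + B') * (p * W) = B' ^ 2 * V := by
  obtain ⟨B', rfl⟩ : p ∣ B :=
    hp.dvd_of_dvd_pow (n := 2)
      ((hp.dvd_or_dvd ⟨A * (A + B) * W, by linear_combination -h⟩).resolve_right hV)
  have hAB : A * (A + p * B') * W = p * (B' ^ 2 * V) :=
    mul_left_cancel₀ hp.ne_zero (by linear_combination h)
  obtain ⟨A', rfl⟩ : p ∣ A := by
    rcases hp.dvd_or_dvd ((hp.dvd_or_dvd ⟨_, hAB⟩).resolve_right hW) with hA | hA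
    · exact hA
    · exact (dvd_add_left ⟨B', rfl⟩).mp hA
  exact ⟨A', B', rfl, rfl, mul_left_cancel₀ (pow_ne_zero 2 hp.ne_zero) (by linear_combination h)⟩

-- Infinite descent: a solution stays a solution after division by `p`.
lemma eq_zero_of_mul_add_mul_eq {R : Type*} [CommRing R] [IsDomain R] [WfDvdMonoid R] {p V W : R}
    (hp : Prime p) (hV : ¬ p ∣ V) (hW : ¬ p ∣ W) {A B : R}
    (h : A * (A + B) * (p * W) = B ^ 2 * V) : A = 0 ∧ B = 0 := by
  have pow_dvd (k : ℕ) : ∀ A B : R, A * (A + B) * (p * W) = B ^ 2 * V → p ^ k ∣ A ∧ p ^ k ∣ B := by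
    induction k with
    | zero => simp
    | succ k ih =>
      intro A B h
      obtain ⟨A', B', rfl, rfl, h'⟩ := exists_eq_mul_of_mul_add_mul_eq hp hV hW h
      rw [pow_succ']
      exact (ih A' B' h').imp (mul_dvd_mul_left p) (mul_dvd_mul_left p)
  exact ⟨eq_zero_of_forall_pow_dvd hp.not_isUnit fun k ↦ (pow_dvd k A B h).1,
    eq_zero_of_forall_pow_dvd hp.not_isUnit fun k ↦ (pow_dvd k A B h).2⟩

variable {K : Type*} [Field K] [CharP K 2]

/-- `D(y)` raised to the power `2 ^ m`, written as a polynomial in `y ^ 2 ^ m`, where `y` is the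
outer variable of `K[X][X]`. -/
def frobeniusTwist (m : ℕ) (D : K[X]) : K[X][X] :=
  D.map (C.comp (iterateFrobenius K 2 m))

lemma eval_frobeniusTwist (m : ℕ) (D : K[X]) :
    (frobeniusTwist m D).eval (X ^ 2 ^ m) = D ^ 2 ^ m := by
  rw [← map_iterateFrobenius_expand 2 D m, frobeniusTwist, eval_map, map_expand,
    expand_eq_comp_X_pow, comp, eval₂_map]

lemma innerDegreeLE_frobeniusTwist (m : ℕ) (D : K[X]) : InnerDegreeLE 0 (frobeniusTwist m D) :=
  InnerDegreeLE.map_C _ D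

lemma not_C_dvd_frobeniusTwist {π : K[X]} (hπ : ¬ IsUnit π) (m : ℕ) {D : K[X]} (hD : D ≠ 0) :
    ¬ C π ∣ frobeniusTwist m D := by
  rw [C_dvd_iff_dvd_coeff]
  intro h
  have hlead := h D.natDegree
  rw [frobeniusTwist, coeff_map, coeff_natDegree, RingHom.comp_apply] at hlead
  refine hπ (isUnit_of_dvd_unit hlead (isUnit_C.mpr (isUnit_iff_ne_zero.mpr ?_)))
  simpa using hD

lemma mul_add_mul_eq_of_eval_eq {m b : ℕ} {c : K} {D : K[X]} (hD : D ≠ 0)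
    (hb : 2 * b + D.natDegree < 2 ^ m) {A B : K[X][X]} (hA : InnerDegreeLE b A)
    (hB : InnerDegreeLE b B)
    (h : A.eval (X ^ 2 ^ m) * D ^ 2 ^ m + B.eval (X ^ 2 ^ m) * homogeneousTrace m (C c) D = 0) :
    A * (A + B) * (C D * frobeniusTwist m D) =
      B ^ 2 * (C (C (c ^ 2 ^ m) * D) + C (C c) * frobeniusTwist m D) := by
  rw [← sub_eq_zero]
  have hU := innerDegreeLE_frobeniusTwist m D
  refine eq_zero_of_eval_X_pow_eq_zero (r := 2 ^ m) (fun j ↦ lt_of_le_of_lt ?_ hb) ?_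
  · refine InnerDegreeLE.sub ?_ ?_ j
    · exact ((hA.mul (hA.add hB)).mul ((InnerDegreeLE.C le_rfl).mul hU)).mono (by omega)
    · rw [sq]
      refine ((hB.mul hB).mul (InnerDegreeLE.add (d := D.natDegree)
        (InnerDegreeLE.C (natDegree_C_mul_le _ _)) ?_)).mono (by omega)
      exact ((InnerDegreeLE.C (natDegree_C c).le).mul hU).mono (by omega)
  · have trace_eq := homogeneousTrace_sq_add m (C c) D
    have pow_eq : D * D ^ (2 * 2 ^ m - 1) = D ^ 2 ^ m * D ^ 2 ^ m := by
      rw [mul_pow_sub_one (by positivity), two_mul, pow_add]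
    apply mul_left_cancel₀ (pow_ne_zero (2 ^ m) hD)
    simp only [eval_sub, eval_mul, eval_add, eval_pow, eval_C, eval_frobeniusTwist, mul_zero]
    have h2 : (2 : K[X]) = 0 := CharTwo.two_eq_zero
    rw [← C_pow] at trace_eq
    generalize homogeneousTrace m (C c) D = T at *
    generalize A.eval (X ^ 2 ^ m) = a at *
    generalize B.eval (X ^ 2 ^ m) = b at *
    generalize D ^ (2 * 2 ^ m - 1) = Y at *
    generalize D ^ 2 ^ m = P at *
    linear_combination D * (a * P - b * T + b * P) * h + b ^ 2 * D * trace_eq +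
      b ^ 2 * C c * pow_eq - b ^ 2 * D * T * P * h2

theorem eq_zero_of_eval_mul_add_eval_mul_eq_zero {m b : ℕ} {c : K} (hc : c ≠ 0) {D : K[X]}
    (hsq : Squarefree D) (hdeg : 0 < D.natDegree)
    (hb : 2 * b + D.natDegree < 2 ^ m) {A B : K[X][X]} (hA : InnerDegreeLE b A)
    (hB : InnerDegreeLE b B)
    (h : A.eval (X ^ 2 ^ m) * D ^ 2 ^ m + B.eval (X ^ 2 ^ m) * homogeneousTrace m (C c) D = 0) :
    A = 0 ∧ B = 0 := by
  have hD : D ≠ 0 := ne_zero_of_natDegree_gt hdeg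
  obtain ⟨π, hπ, D', hDD'⟩ : ∃ π, Irreducible π ∧ π ∣ D := exists_irreducible_of_natDegree_pos hdeg
  have hprime : Prime (C π) := prime_C_iff.mpr hπ.prime
  have hU := not_C_dvd_frobeniusTwist hπ.not_isUnit m hD
  have hD' : ¬ C π ∣ C D' := by
    rw [C_dvd_iff_dvd_coeff]
    intro hdvd
    obtain ⟨w, hw⟩ : π ∣ D' := by simpa using hdvd 0
    exact hπ.not_isUnit (hsq π ⟨w, by rw [hDD', hw, mul_assoc]⟩)
  have hV : ¬ C π ∣ C (C (c ^ 2 ^ m) * D) + C (C c) * frobeniusTwist m D := by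
    rw [dvd_add_right (_root_.map_dvd C (dvd_mul_of_dvd_right ⟨D', hDD'⟩ _))]
    exact fun hdvd ↦ hU ((isUnit_C.mpr (isUnit_C.mpr hc.isUnit)).dvd_mul_left.mp hdvd)
  refine eq_zero_of_mul_add_mul_eq hprime hV (fun hdvd ↦ ?_)
    (W := C D' * frobeniusTwist m D) ?_
  · exact (hprime.dvd_or_dvd hdvd).elim hD' hU
  · rw [← mul_add_mul_eq_of_eval_eq hD hb hA hB h, ← mul_assoc (C π), ← C_mul, ← hDD']

end Nonvanishing

section DimensionCount

/-- The polynomial in `R[X][X]` of outer degree `< m` and inner degree `< n` with coefficients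
`c`. -/
def bivariateOfCoeffs {R : Type*} [Semiring R] {m n : ℕ} (c : Fin m × Fin n → R) : R[X][X] :=
  ∑ x, monomial x.1 (monomial x.2 (c x))

section bivariateOfCoeffs

variable {R : Type*} [CommSemiring R] {m n : ℕ} (c : Fin m × Fin n → R)

lemma coeff_coeff_bivariateOfCoeffs (x : Fin m × Fin n) :
    ((bivariateOfCoeffs c).coeff x.1).coeff x.2 = c x := by
  simp [bivariateOfCoeffs, finsetSum_coeff, coeff_monomial, Fin.val_inj,
    Fintype.sum_prod_type]

lemma bivariateOfCoeffs_ne_zero {c : Fin m × Fin n → R} {x : Fin m × Fin n} (hx : c x ≠ 0) :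
    bivariateOfCoeffs c ≠ 0 := by
  intro h
  simpa [h] using hx.symm.trans_eq (coeff_coeff_bivariateOfCoeffs c x).symm

lemma innerDegreeLE_bivariateOfCoeffs : InnerDegreeLE (n - 1) (bivariateOfCoeffs c) := by
  intro j
  rw [bivariateOfCoeffs, finsetSum_coeff]
  refine natDegree_sum_le_of_forall_le _ _ fun x _ ↦ ?_
  rw [coeff_monomial]
  split_ifs
  · exact (natDegree_monomial_le _).trans (by omega)
  · simp

lemma natDegree_bivariateOfCoeffs_le : (bivariateOfCoeffs c).natDegree ≤ m - 1 :=
  natDegree_sum_le_of_forall_le _ _ fun x _ ↦ (natDegree_monomial_le _).trans (by omega)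

lemma evalInnerPow_bivariateOfCoeffs (r : ℕ) :
    evalInnerPow r (bivariateOfCoeffs c) = ∑ x, c x • X ^ (r * x.2 + x.1) := by
  simp [bivariateOfCoeffs, evalInnerPow, ← C_mul_X_pow_eq_monomial, smul_eq_C_mul, pow_add, pow_mul,
    mul_assoc, map_pow (expand R r), -map_pow]

end bivariateOfCoeffs

lemma exists_evalInnerPow_mul_add_eq_zero {K : Type*} [Field K] {r b J e : ℕ} {U V : K[X]}
    (hU : U.natDegree ≤ e) (hV : V.natDegree ≤ e)
    (h : r * b + J + e + 1 < 2 * ((J + 1) * (b + 1))) :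
    ∃ P Q : K[X][X], ¬ (P = 0 ∧ Q = 0) ∧
      (InnerDegreeLE b P ∧ P.natDegree ≤ J) ∧ (InnerDegreeLE b Q ∧ Q.natDegree ≤ J) ∧
      evalInnerPow r P * U + evalInnerPow r Q * V = 0 := by
  let monomials : (Fin (J + 1) × Fin (b + 1)) ⊕ (Fin (J + 1) × Fin (b + 1)) → K[X] :=
    Sum.elim (fun x ↦ X ^ (r * x.2 + x.1) * U) (fun x ↦ X ^ (r * x.2 + x.1) * V)
  have mem_degreeLT (x) : monomials x ∈ degreeLT K (r * b + J + e + 1) := by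
    have mem (x : Fin (J + 1) × Fin (b + 1)) {W : K[X]} (hW : W.natDegree ≤ e) :
        X ^ (r * x.2 + x.1) * W ∈ degreeLT K (r * b + J + e + 1) := by
      have hx : r * x.2 ≤ r * b := Nat.mul_le_mul_left r (by omega)
      have := natDegree_mul_le_of_le (natDegree_X_pow_le (R := K) (r * x.2 + x.1)) hW
      exact mem_degreeLT.mpr (degree_le_natDegree.trans_lt (Nat.cast_lt.mpr (by omega)))
    rcases x with x | x
    exacts [mem x hU, mem x hV]
  have not_linearIndependent : ¬ LinearIndependent K
      (fun x ↦ (⟨monomials x, mem_degreeLT x⟩ : degreeLT K (r * b + J + e + 1))) := by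
    intro hli
    have := hli.fintype_card_le_finrank
    rw [(degreeLTEquiv K _).finrank_eq, Module.finrank_fin_fun] at this
    simp only [Fintype.card_sum, Fintype.card_prod, Fintype.card_fin] at this
    omega
  obtain ⟨c, hc, x, hx⟩ := Fintype.not_linearIndependent_iff.mp not_linearIndependent
  refine ⟨bivariateOfCoeffs (c ∘ Sum.inl), bivariateOfCoeffs (c ∘ Sum.inr), ?_,
    ⟨innerDegreeLE_bivariateOfCoeffs _, natDegree_bivariateOfCoeffs_le _⟩,
    ⟨innerDegreeLE_bivariateOfCoeffs _, natDegree_bivariateOfCoeffs_le _⟩, ?_⟩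
  · rintro ⟨hP, hQ⟩
    rcases x with x | x
    exacts [bivariateOfCoeffs_ne_zero (c := c ∘ Sum.inl) hx hP,
      bivariateOfCoeffs_ne_zero (c := c ∘ Sum.inr) hx hQ]
  · rw [Subtype.ext_iff] at hc
    simpa [monomials, evalInnerPow_bivariateOfCoeffs, Finset.sum_mul] using hc

end DimensionCount

section PointCount

variable {E : Type*} [Field E] [CharP E 2]

lemma eval_auxiliary_eq_zero {m : ℕ} {c s v : E} (hv : v ^ (2 ^ m * 2 ^ m) = v) {D : E[X]}
    {A B : E[X][X]}
    (h : evalInnerPow (2 ^ m) (A.map (mapRingHom (iterateFrobenius E 2 m))) * D ^ 2 ^ m +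
      evalInnerPow (2 ^ m) (B.map (mapRingHom (iterateFrobenius E 2 m))) *
        (homogeneousTrace m (C c) D + C s * D ^ 2 ^ m) = 0)
    (hs : truncatedTrace m (c * (D.eval v)⁻¹) + truncatedTrace m (c * (D.eval v)⁻¹) ^ 2 ^ m = s) :
    (A.eval (X ^ 2 ^ m) * D ^ 2 ^ m + B.eval (X ^ 2 ^ m) * homogeneousTrace m (C c) D).eval v =
      0 := by
  have map_eval : (homogeneousTrace m (C c) D).eval v = homogeneousTrace m c (D.eval v) := by
    rw [← coe_evalRingHom, map_homogeneousTrace, coe_evalRingHom, eval_C]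
  have h_eval := congrArg (eval v) h
  simp only [eval_add, eval_mul, eval_pow, eval_C, eval_zero, map_eval] at h_eval ⊢
  rcases eq_or_ne (D.eval v) 0 with hD | hD
  · simp [hD, homogeneousTrace_zero_right]
  apply eq_zero_of_pow_eq_zero (n := 2 ^ m)
  rw [add_pow_char_pow, mul_pow, mul_pow, eval_eval_X_pow_pow 2 m hv, eval_eval_X_pow_pow 2 m hv]
  rw [homogeneousTrace_eq_mul_truncatedTrace m c hD] at h_eval ⊢
  set k := truncatedTrace m (c * (D.eval v)⁻¹)
  generalize eval v (evalInnerPow _ (A.map _)) = a at *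
  generalize eval v (evalInnerPow _ (B.map _)) = b at *
  have hab : a + b * (k + s) = 0 :=
    (mul_eq_zero.mp (by linear_combination h_eval)).resolve_left (pow_ne_zero (2 ^ m) hD)
  have hks : k + s = k ^ 2 ^ m := by rw [← hs, CharTwo.add_cancel_left]
  rw [hks] at hab
  linear_combination (eval v D ^ 2 ^ m) ^ 2 ^ m * hab

theorem exists_auxiliary_polynomial [Fintype E] {m : ℕ}
    (hcard : Fintype.card E = 2 ^ m * 2 ^ m) {c : E} (hc : c ≠ 0) (s : E) {D : E[X]}
    (hsq : Squarefree D) (hdeg : 0 < D.natDegree) (hm : 4 * D.natDegree < 2 ^ m) :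
    ∃ H : E[X], H ≠ 0 ∧ 2 * H.natDegree ≤ 2 ^ m * 2 ^ m + 6 * D.natDegree * 2 ^ m ∧
      ∀ v, truncatedTrace m (c * (D.eval v)⁻¹) + truncatedTrace m (c * (D.eval v)⁻¹) ^ 2 ^ m = s →
        H.eval v = 0 := by
  set δ := D.natDegree
  obtain ⟨b, hb⟩ : ∃ b, 2 ^ m = 4 * (b + 1) := by
    have hm2 : 2 < m := (Nat.pow_lt_pow_iff_right one_lt_two).mp (by omega : 2 ^ 2 < 2 ^ m)
    obtain ⟨k, hk⟩ := pow_dvd_pow 2 hm2.le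
    exact ⟨k - 1, by omega⟩
  have hT : (homogeneousTrace m (C c) D).natDegree ≤ 2 ^ m * δ :=
    natDegree_homogeneousTrace_le m c D
  have hDpow : (D ^ 2 ^ m).natDegree ≤ 2 ^ m * δ := natDegree_pow_le
  have hV : (homogeneousTrace m (C c) D + C s * D ^ 2 ^ m).natDegree ≤ 2 ^ m * δ :=
    natDegree_add_le_of_degree_le hT ((natDegree_C_mul_le _ _).trans hDpow)
  obtain ⟨P, Q, hPQ, ⟨hP, hPJ⟩, ⟨hQ, hQJ⟩, hrel⟩ :=
    exists_evalInnerPow_mul_add_eq_zero (r := 2 ^ m) (b := b) (J := 2 * b + 1 + 2 * δ) hDpow hV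
      (by rw [hb] at hm ⊢; nlinarith)
  have frobenius_surjective : Function.Surjective
      (mapRingHom (mapRingHom (iterateFrobenius E 2 m))) :=
    map_surjective _ (map_surjective _ (bijective_iterateFrobenius E 2 m).surjective)
  obtain ⟨A, rfl⟩ := frobenius_surjective P
  obtain ⟨B, rfl⟩ := frobenius_surjective Q
  have frobenius_injective := (iterateFrobenius E 2 m).injective
  replace hP := InnerDegreeLE.of_map frobenius_injective hP
  replace hQ := InnerDegreeLE.of_map frobenius_injective hQ
  rw [coe_mapRingHom, natDegree_map_eq_of_injective (map_injective _ frobenius_injective)]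
    at hPJ hQJ
  refine ⟨A.eval (X ^ 2 ^ m) * D ^ 2 ^ m + B.eval (X ^ 2 ^ m) * homogeneousTrace m (C c) D,
    fun h0 ↦ hPQ ?_, ?_, fun v ↦ eval_auxiliary_eq_zero ?_ hrel⟩
  · obtain ⟨rfl, rfl⟩ := eq_zero_of_eval_mul_add_eval_mul_eq_zero hc hsq hdeg (by omega) hP hQ h0
    simp
  · have hA := natDegree_mul_le_of_le (hP.natDegree_eval_X_pow_le hPJ (2 ^ m)) hDpow
    have hB := natDegree_mul_le_of_le (hQ.natDegree_eval_X_pow_le hQJ (2 ^ m)) hT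
    refine (Nat.mul_le_mul_left 2 (natDegree_add_le_of_degree_le hA hB)).trans ?_
    rw [hb]
    nlinarith
  · rw [← hcard, FiniteField.pow_card]

theorem two_mul_card_truncatedTrace_le [Fintype E] [DecidableEq E] {m : ℕ}
    (hcard : Fintype.card E = 2 ^ m * 2 ^ m) {c : E} (hc : c ≠ 0) (s : E) {D : E[X]}
    (hsq : Squarefree D) (hdeg : 0 < D.natDegree) (hm : 4 * D.natDegree < 2 ^ m) :
    2 * (Finset.univ.filter fun v ↦ truncatedTrace m (c * (D.eval v)⁻¹) +
        truncatedTrace m (c * (D.eval v)⁻¹) ^ 2 ^ m = s).card ≤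
      2 ^ m * 2 ^ m + 6 * D.natDegree * 2 ^ m := by
  obtain ⟨H, hH, hHdeg, hroot⟩ := exists_auxiliary_polynomial hcard hc s hsq hdeg hm
  refine (Nat.mul_le_mul_left 2 ?_).trans hHdeg
  refine card_le_degree_of_subset_roots fun v hv ↦ ?_
  exact (mem_roots hH).mpr (hroot v (by simpa using hv))

end PointCount

section AdditiveCharacterSum

lemma exists_mulShift_eq {F : Type*} [Field F] [Finite F] {ψ : AddChar F ℂ} (hψ : ψ ≠ 1)
    (φ : AddChar F ℂ) : ∃ c, ψ.mulShift c = φ := by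
  have := Fintype.ofFinite F
  have hbij : Function.Bijective fun c ↦ ψ.mulShift c :=
    (Fintype.bijective_iff_injective_and_card _).mpr
      ⟨AddChar.to_mulShift_inj_of_isPrimitive (.of_ne_one hψ), (AddChar.card_eq).symm⟩
  exact hbij.surjective φ

lemma norm_sum_neg_one_pow_le_of_card_fiber_le {α : Type*} [Fintype α] {M : ℕ} {t : α → ZMod 2}
    (h : ∀ s, 2 * (Finset.univ.filter fun v ↦ t v = s).card ≤ Fintype.card α + M) :
    ‖∑ v, (-1 : ℂ) ^ (t v).val‖ ≤ M := by
  set N : ZMod 2 → ℕ := fun s ↦ (Finset.univ.filter fun v ↦ t v = s).card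
  have card_eq : N 0 + N 1 = Fintype.card α := by
    rw [← Finset.card_univ, Finset.card_eq_sum_card_fiberwise (f := t) (t := Finset.univ) (by simp)]
    exact (Fin.sum_univ_two N).symm
  have sum_eq : ∑ v, (-1 : ℂ) ^ (t v).val = ((N 0 : ℝ) - N 1 : ℝ) := by
    rw [← Finset.sum_fiberwise Finset.univ t]
    have fiber (s : ZMod 2) : ∑ v with t v = s, (-1 : ℂ) ^ (t v).val = N s * (-1) ^ s.val := by
      rw [Finset.sum_congr rfl fun v hv ↦ by rw [(Finset.mem_filter.mp hv).2], Finset.sum_const,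
        nsmul_eq_mul]
    rw [Finset.sum_congr rfl fun s _ ↦ fiber s]
    refine (Fin.sum_univ_two _).trans ?_
    norm_num [ZMod.val]
    rfl
  rw [sum_eq, norm_real, Real.norm_eq_abs, abs_le]
  have h0 : (2 * N 0 : ℝ) ≤ N 0 + N 1 + M := mod_cast card_eq ▸ h 0
  have h1 : (2 * N 1 : ℝ) ≤ N 0 + N 1 + M := mod_cast card_eq ▸ h 1
  constructor <;> linarith

lemma exists_addChar_eq_neg_one_pow_trace {E : Type*} [Field E] [Finite E] [Algebra (ZMod 2) E]
    (ψ : AddChar E ℂ) :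
    ∃ c : E, ∀ x, ψ x = (-1) ^ (Algebra.trace (ZMod 2) E (c * x)).val := by
  let ψ₀ : AddChar E ℂ := (AddChar.zmodChar 2 neg_one_sq).compAddMonoidHom
    (Algebra.trace (ZMod 2) E).toAddMonoidHom
  have hψ₀ : ψ₀ ≠ 1 := by
    obtain ⟨x, hx⟩ := Algebra.trace_surjective (ZMod 2) E 1
    refine AddChar.ne_one_iff.mpr ⟨x, ?_⟩
    norm_num [ψ₀, hx, AddChar.zmodChar_apply, ZMod.val_one]
  obtain ⟨c, rfl⟩ := exists_mulShift_eq hψ₀ ψ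
  exact ⟨c, fun x ↦ rfl⟩

lemma truncatedTrace_add_pow {E : Type*} [Field E] [Fintype E] [Algebra (ZMod 2) E] {m : ℕ}
    (hcard : Fintype.card E = 2 ^ m * 2 ^ m) (x : E) :
    truncatedTrace m x + truncatedTrace m x ^ 2 ^ m =
      algebraMap (ZMod 2) E (Algebra.trace (ZMod 2) E x) := by
  have : CharP E 2 := charP_of_injective_algebraMap (algebraMap (ZMod 2) E).injective 2
  have finrank_eq : Module.finrank (ZMod 2) E = m + m := by
    refine Nat.pow_right_injective le_rfl ?_
    dsimp only
    rw [pow_add, ← hcard, Module.card_eq_pow_finrank (K := ZMod 2), ZMod.card]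
  rw [FiniteField.algebraMap_trace_eq_sum_pow, finrank_eq, Finset.sum_range_add, truncatedTrace,
    sum_pow_char_pow]
  simp [← pow_mul, ← pow_add, add_comm]

theorem norm_sum_addChar_inv_eval_le {E : Type*} [Field E] [Fintype E] [CharP E 2] {m : ℕ}
    (hcard : Fintype.card E = 2 ^ m * 2 ^ m) {ψ : AddChar E ℂ} (hψ : ψ ≠ 1) {D : E[X]}
    (hsq : Squarefree D) (hdeg : 0 < D.natDegree) :
    ‖∑ v, ψ (D.eval v)⁻¹‖ ≤ 6 * D.natDegree * 2 ^ m := by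
  classical
  have hδ : (1 : ℝ) ≤ D.natDegree := Nat.one_le_cast.mpr hdeg
  rcases le_or_gt (2 ^ m) (4 * D.natDegree) with hm | hm
  · have hm' : (2 : ℝ) ^ m ≤ 4 * D.natDegree := mod_cast hm
    calc ‖∑ v, ψ (D.eval v)⁻¹‖ ≤ ∑ _v : E, (1 : ℝ) :=
          norm_sum_le_of_le _ fun v _ ↦ (ψ.norm_apply _).le
      _ = 2 ^ m * 2 ^ m := by simp [hcard]
      _ ≤ 6 * D.natDegree * 2 ^ m := by gcongr; linarith
  let _ : Algebra (ZMod 2) E := ZMod.algebra E 2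
  obtain ⟨c, hc⟩ := exists_addChar_eq_neg_one_pow_trace ψ
  have hc0 : c ≠ 0 := by
    rintro rfl
    exact hψ (DFunLike.ext _ _ fun x ↦ by simp [hc x])
  simp_rw [hc]
  refine (norm_sum_neg_one_pow_le_of_card_fiber_le (M := 6 * D.natDegree * 2 ^ m)
    fun s ↦ ?_).trans_eq (by simp)
  rw [hcard]
  convert two_mul_card_truncatedTrace_le hcard hc0 (algebraMap (ZMod 2) E s) hsq hdeg hm using 4
  rw [truncatedTrace_add_pow hcard, (algebraMap (ZMod 2) E).injective.eq_iff]

end AdditiveCharacterSum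

section MixedCharacterSum

lemma norm_sum_monoidHom_mul_le {G : Type*} [CommGroup G] [Fintype G] {χ : G →* ℂ} {δ : ℕ}
    (hχ : ∀ u, χ u ^ δ = 1) {f : G → ℂ} {B : ℝ} (h : ∀ u, ‖∑ v, f (u * v ^ δ)‖ ≤ B) :
    ‖∑ u, χ u * f u‖ ≤ B := by
  have norm_eq_one (u : G) : ‖χ u‖ = 1 :=
    norm_eq_one_of_pow_eq_one (by rw [← map_pow, pow_card_eq_one, map_one]) Fintype.card_ne_zero
  have translate (v : G) : ∑ u, χ u * f u = ∑ u, χ u * f (u * v ^ δ) := by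
    rw [← Equiv.sum_comp (Equiv.mulRight (v ^ δ)) fun u ↦ χ u * f u]
    simp [hχ]
  have average : Fintype.card G * ∑ u, χ u * f u = ∑ u, χ u * ∑ v, f (u * v ^ δ) := by
    simp_rw [Finset.mul_sum]
    rw [Finset.sum_comm, ← Finset.sum_congr rfl fun v _ ↦ translate v]
    simp [Finset.mul_sum]
  refine le_of_mul_le_mul_left ?_ (Nat.cast_pos.mpr (Fintype.card_pos (α := G)))
  calc Fintype.card G * ‖∑ u, χ u * f u‖ = ‖∑ u, χ u * ∑ v, f (u * v ^ δ)‖ := by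
        rw [← average, norm_mul, Complex.norm_natCast]
    _ ≤ ∑ _u : G, B :=
        norm_sum_le_of_le _ fun u _ ↦ by rw [norm_mul, norm_eq_one, one_mul]; exact h u
    _ = Fintype.card G * B := by simp

lemma sum_eq_add_sum_units {F M : Type*} [GroupWithZero F] [Fintype F] [Fintype Fˣ]
    [AddCommMonoid M] (f : F → M) : ∑ x, f x = f 0 + ∑ x : Fˣ, f x := by
  classical
  rw [Fintype.sum_eq_add_sum_subtype_ne f 0, ← unitsEquivNeZero.sum_comp]
  rfl

variable {E : Type*} [Field E] [Fintype E] [CharP E 2]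

lemma norm_sum_addChar_div_one_add_le {m : ℕ} (hcard : Fintype.card E = 2 ^ m * 2 ^ m) {δ : ℕ}
    (hδ : Odd δ) {ψ : AddChar E ℂ} (hψ : ψ ≠ 1) {a u : E} (ha : a ≠ 0) (hu : u ≠ 0) :
    ‖∑ v : E, ψ (a / (1 + u * v ^ δ))‖ ≤ 6 * δ * 2 ^ m := by
  have hsep : (X ^ δ - C (-u⁻¹) : E[X]).Separable := by
    refine separable_X_pow_sub_C _ ?_ (neg_ne_zero.mpr (inv_ne_zero hu))
    rwa [Ne, CharP.cast_eq_zero_iff E 2, ← even_iff_two_dvd, Nat.not_even_iff_odd]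
  have hψ' : ψ.mulShift (a / u) ≠ 1 := AddChar.IsPrimitive.of_ne_one hψ (div_ne_zero ha hu)
  have hbound := norm_sum_addChar_inv_eval_le hcard hψ' hsep.squarefree
    (by rw [natDegree_X_pow_sub_C]; exact hδ.pos)
  rw [natDegree_X_pow_sub_C] at hbound
  refine (congrArg norm (Finset.sum_congr rfl fun v _ ↦ ?_)).trans_le hbound
  have factor : 1 + u * v ^ δ = u * (v ^ δ + u⁻¹) := by field_simp; ring
  rw [AddChar.mulShift_apply, factor, div_mul_eq_div_div, div_eq_mul_inv (a / u)]
  simp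

theorem norm_sum_mulChar_mul_addChar_le {m : ℕ} (hcard : Fintype.card E = 2 ^ m * 2 ^ m) {δ : ℕ}
    (hδ : Odd δ) {χ : MulChar E ℂ} (hχ : χ ^ δ = 1) {ψ : AddChar E ℂ} (hψ : ψ ≠ 1) {a : E}
    (ha : a ≠ 0) : ‖∑ t, χ (t + a) * χ⁻¹ t * ψ t‖ ≤ 6 * δ * 2 ^ m + 2 := by
  classical
  let f : E → ℂ := fun u ↦ ψ (a / (1 + u))
  have substitute : ∑ t, χ (t + a) * χ⁻¹ t * ψ t = ∑ u : Eˣ, χ u * f u - 1 := by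
    have invert : ∑ u, χ u * f u = ∑ t, χ (1 + a * t⁻¹) * ψ t := by
      rw [← Equiv.sum_comp (((Equiv.inv E).trans (Equiv.mulLeft₀ a ha)).trans (Equiv.addLeft 1))]
      refine Finset.sum_congr rfl fun t _ ↦ ?_
      simp [f, ← add_assoc, CharTwo.add_self_eq_zero, div_mul_cancel_left₀ ha]
    rw [sum_eq_add_sum_units, MulChar.map_zero, zero_mul, zero_add] at invert
    rw [invert, sum_eq_add_sum_units, sum_eq_add_sum_units fun t ↦ χ (1 + a * t⁻¹) * ψ t]
    simp only [MulChar.map_zero, mul_zero, zero_add, inv_zero, add_zero, map_one,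
      AddChar.map_zero_eq_one, mul_one, add_sub_cancel_left]
    refine Finset.sum_congr rfl fun t _ ↦ ?_
    rw [MulChar.inv_apply', ← map_mul, add_mul, mul_inv_cancel₀ t.ne_zero]
  have inner_le (u : Eˣ) : ‖∑ v : Eˣ, f (u * v ^ δ)‖ ≤ 6 * δ * 2 ^ m + 1 := by
    have split := sum_eq_add_sum_units fun v ↦ f (u * v ^ δ)
    rw [eq_comm, ← eq_sub_iff_add_eq'] at split
    rw [split]
    refine (norm_sub_le _ _).trans (add_le_add ?_ (ψ.norm_apply _).le)
    exact norm_sum_addChar_div_one_add_le hcard hδ hψ ha u.ne_zero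
  have hχ' (u : Eˣ) : χ u ^ δ = 1 := by
    rw [← MulChar.pow_apply_coe, hχ, MulChar.one_apply_coe]
  rw [substitute]
  calc ‖∑ u : Eˣ, χ u * f u - 1‖ ≤ ‖∑ u : Eˣ, χ u * f u‖ + ‖(1 : ℂ)‖ := norm_sub_le _ _
    _ ≤ (6 * δ * 2 ^ m + 1) + 1 := by
      rw [norm_one]
      gcongr
      exact norm_sum_monoidHom_mul_le (χ := χ.toMonoidHom.comp (Units.coeHom E)) hχ' inner_le
    _ = 6 * δ * 2 ^ m + 2 := by ring

end MixedCharacterSum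

section EulerProduct

/-- A function on polynomials that is completely multiplicative on the monic ones, such as a
Dirichlet character; its values elsewhere are irrelevant. -/
structure IsMultiplicativeOnMonic {F R : Type*} [Field F] [CommRing R] (lam : F[X] → R) : Prop where
  map_one : lam 1 = 1
  map_mul : ∀ {f g : F[X]}, f.Monic → g.Monic → lam (f * g) = lam f * lam g

lemma IsMultiplicativeOnMonic.map_pow {F R : Type*} [Field F] [CommRing R] {lam : F[X] → R}
    (hlam : IsMultiplicativeOnMonic lam) {f : F[X]} (hf : f.Monic) (k : ℕ) :
    lam (f ^ k) = lam f ^ k := by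
  induction k with
  | zero => simp [hlam.map_one]
  | succ k ih => rw [pow_succ, hlam.map_mul (hf.pow k) hf, ih, pow_succ]

open UniqueFactorizationMonoid in
lemma monic_and_irreducible_of_mem_normalizedFactors {K : Type*} [Field K] [DecidableEq K]
    {f P : K[X]} (hP : P ∈ normalizedFactors f) : P.Monic ∧ Irreducible P := by
  have hirr := irreducible_of_normalized_factor P hP
  exact ⟨normalize_normalized_factor P hP ▸ monic_normalize hirr.ne_zero, hirr⟩

open UniqueFactorizationMonoid in
lemma natDegree_eq_sum_count_normalizedFactors {K : Type*} [Field K] [DecidableEq K]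
    {f : K[X]} (hf : f.Monic) : f.natDegree = ∑ P ∈ (normalizedFactors f).toFinset,
      (normalizedFactors f).count P * P.natDegree := by
  conv_lhs => rw [← hf.normalize_eq_self, ← prod_normalizedFactors_eq hf.ne_zero,
    natDegree_multiset_prod_of_monic _ fun P hP ↦
      (monic_and_irreducible_of_mem_normalizedFactors hP).1, Finset.sum_multiset_map_count]
  simp

variable (F : Type*) [Field F] [Finite F]

lemma finite_setOf_monic_and_natDegree_eq (k : ℕ) :
    {f : F[X] | f.Monic ∧ f.natDegree = k}.Finite := by
  have : Finite (degreeLT F (k + 1)) := .of_equiv _ (degreeLTEquiv F (k + 1)).toEquiv.symm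
  refine (Set.toFinite (degreeLT F (k + 1) : Set F[X])).subset ?_
  rintro f ⟨-, rfl⟩
  exact mem_degreeLT.mpr (degree_le_natDegree.trans_lt (Nat.cast_lt.mpr f.natDegree.lt_succ_self))

/-- The monic polynomials of degree `k` over a finite field. -/
def monicsOfDegree (k : ℕ) : Finset F[X] := (finite_setOf_monic_and_natDegree_eq F k).toFinset

/-- The pairs `(P, e)` with `P` monic irreducible, `e ≠ 0` and `deg (P ^ e) = j`, standing for the
prime powers of degree `j`. -/
def primePowersOfDegree (j : ℕ) : Finset (F[X] × ℕ) :=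
  open Classical in
  {x ∈ (Finset.range (j + 1)).biUnion (monicsOfDegree F) ×ˢ Finset.Icc 1 j |
    Irreducible x.1 ∧ x.2 * x.1.natDegree = j}

variable {F}

lemma mem_monicsOfDegree {k : ℕ} {f : F[X]} :
    f ∈ monicsOfDegree F k ↔ f.Monic ∧ f.natDegree = k := by
  simp [monicsOfDegree]

lemma mem_primePowersOfDegree {j : ℕ} {x : F[X] × ℕ} :
    x ∈ primePowersOfDegree F j ↔
      x.1.Monic ∧ Irreducible x.1 ∧ 1 ≤ x.2 ∧ x.2 * x.1.natDegree = j := by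
  obtain ⟨P, e⟩ := x
  simp only [primePowersOfDegree, Finset.mem_filter, Finset.mem_product, Finset.mem_biUnion,
    Finset.mem_range, mem_monicsOfDegree, Finset.mem_Icc]
  constructor
  · rintro ⟨⟨⟨_, -, hP, -⟩, he, -⟩, hirr, hj⟩
    exact ⟨hP, hirr, he, hj⟩
  · rintro ⟨hP, hirr, he, hj⟩
    have := hirr.natDegree_pos
    exact ⟨⟨⟨P.natDegree, by nlinarith, hP, rfl⟩, he, by nlinarith⟩, hirr, hj⟩

variable {R : Type*} [CommRing R]

/-- The `k`-th coefficient of the L-function `∑ λ(f) T ^ deg f` over monic `f`. -/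
def lCoeff (lam : F[X] → R) (k : ℕ) : R := ∑ f ∈ monicsOfDegree F k, lam f

/-- The `j`-th coefficient of `T L' / L` for the L-function `L` of `λ`. -/
def lPowerSum (lam : F[X] → R) (j : ℕ) : R :=
  ∑ x ∈ primePowersOfDegree F j, x.1.natDegree * lam x.1 ^ x.2

lemma lCoeff_zero {lam : F[X] → R} (hlam : IsMultiplicativeOnMonic lam) : lCoeff lam 0 = 1 := by
  have : monicsOfDegree F 0 = {1} := by
    ext f
    rw [mem_monicsOfDegree, Finset.mem_singleton]
    exact ⟨fun h ↦ h.1.natDegree_eq_zero.mp h.2, by rintro rfl; simp⟩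
  rw [lCoeff, this, Finset.sum_singleton, hlam.map_one]

lemma lCoeff_eq_zero_of_add [IsDomain R] {lam : F[X] → R} {k : ℕ} {h : F[X]} (hdeg : h.degree < k)
    {c : R} (hc : c ≠ 1) (hlam : ∀ f ∈ monicsOfDegree F k, lam (f + h) = c * lam f) :
    lCoeff lam k = 0 := by
  have add_mem {h : F[X]} (hdeg : h.degree < k) (f : F[X]) (hf : f ∈ monicsOfDegree F k) :
      f + h ∈ monicsOfDegree F k := by
    obtain ⟨hmonic, rfl⟩ := mem_monicsOfDegree.mp hf
    rw [← degree_eq_natDegree hmonic.ne_zero] at hdeg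
    exact mem_monicsOfDegree.mpr ⟨hmonic.add_of_left hdeg,
      natDegree_eq_of_degree_eq (degree_add_eq_left_of_degree_lt hdeg)⟩
  have scale : lCoeff lam k = c * lCoeff lam k := by
    rw [lCoeff, Finset.mul_sum]
    refine Finset.sum_nbij' (· + -h) (· + h) (add_mem (by rwa [degree_neg])) (add_mem hdeg)
      (by simp) (by simp) fun f hf ↦ ?_
    rw [← hlam _ (add_mem (by rwa [degree_neg]) f hf), neg_add_cancel_right]
  by_contra hne
  exact hc ((mul_eq_right₀ hne).mp scale.symm)

open UniqueFactorizationMonoid in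
lemma natDegree_eq_sum_primePowersOfDegree {f : F[X]} (hf : f.Monic)
    [DecidablePred fun x : F[X] × ℕ ↦ x.1 ^ x.2 ∣ f] :
    f.natDegree = ∑ j ∈ Finset.Icc 1 f.natDegree,
      ∑ x ∈ primePowersOfDegree F j with x.1 ^ x.2 ∣ f, x.1.natDegree := by
  classical
  set s := normalizedFactors f
  have pow_dvd_iff {P : F[X]} {e : ℕ} (hP : P.Monic) (hirr : Irreducible P) :
      P ^ e ∣ f ↔ e ≤ s.count P := by
    rw [pow_dvd_iff_le_emultiplicity, emultiplicity_eq_count_normalizedFactors hirr hf.ne_zero,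
      hP.normalize_eq_self, Nat.cast_le]
  have natDegree_eq :
      f.natDegree = ∑ P ∈ s.toFinset, ∑ _e ∈ Finset.Icc 1 (s.count P), P.natDegree := by
    simp_rw [Finset.sum_const, Nat.card_Icc, Nat.add_sub_cancel]
    exact natDegree_eq_sum_count_normalizedFactors hf
  conv_lhs => rw [natDegree_eq]
  rw [Finset.sum_sigma', Finset.sum_sigma']
  refine Finset.sum_bij' (fun a _ ↦ ⟨a.2 * a.1.natDegree, a.1, a.2⟩) (fun b _ ↦ ⟨b.2.1, b.2.2⟩)
    ?_ ?_ (fun _ _ ↦ rfl) ?_ (fun _ _ ↦ rfl)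
  · rintro ⟨P, e⟩ h
    simp only [Finset.mem_sigma, Multiset.mem_toFinset, Finset.mem_Icc, Finset.mem_filter,
      mem_primePowersOfDegree] at h ⊢
    obtain ⟨hP, he, hcount⟩ := h
    obtain ⟨hmonic, hirr⟩ := monic_and_irreducible_of_mem_normalizedFactors hP
    have hdvd := (pow_dvd_iff hmonic hirr).mpr hcount
    refine ⟨⟨Nat.mul_pos he hirr.natDegree_pos, ?_⟩, ⟨hmonic, hirr, he, trivial⟩, hdvd⟩
    exact natDegree_pow P e ▸ natDegree_le_of_dvd hdvd hf.ne_zero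
  · rintro ⟨j, P, e⟩ h
    simp only [Finset.mem_sigma, Multiset.mem_toFinset, Finset.mem_Icc, Finset.mem_filter,
      mem_primePowersOfDegree] at h ⊢
    obtain ⟨-, ⟨hmonic, hirr, he, -⟩, hdvd⟩ := h
    have hcount := (pow_dvd_iff hmonic hirr).mp hdvd
    exact ⟨Multiset.count_pos.mp (he.trans hcount), he, hcount⟩
  · rintro ⟨j, P, e⟩ h
    simp only [Finset.mem_sigma, Finset.mem_filter, mem_primePowersOfDegree] at h
    simp [h.2.1.2.2.2]

lemma sum_monicsOfDegree_filter_dvd {lam : F[X] → R} (hlam : IsMultiplicativeOnMonic lam) {Q : F[X]}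
    (hQ : Q.Monic) {k : ℕ} (hk : Q.natDegree ≤ k) [DecidablePred (Q ∣ ·)] :
    ∑ f ∈ monicsOfDegree F k with Q ∣ f, lam f = lam Q * lCoeff lam (k - Q.natDegree) := by
  rw [lCoeff, Finset.mul_sum]
  refine (Finset.sum_bij (fun g _ ↦ Q * g) ?_ ?_ ?_ ?_).symm
  · intro g hg
    rw [mem_monicsOfDegree] at hg
    rw [Finset.mem_filter, mem_monicsOfDegree]
    refine ⟨⟨hQ.mul hg.1, ?_⟩, dvd_mul_right _ _⟩
    rw [hQ.natDegree_mul hg.1, hg.2, Nat.add_sub_cancel' hk]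
  · exact fun _ _ _ _ h ↦ mul_left_cancel₀ hQ.ne_zero h
  · intro f hf
    rw [Finset.mem_filter, mem_monicsOfDegree] at hf
    obtain ⟨⟨hf, rfl⟩, g, rfl⟩ := hf
    have hg := hQ.of_mul_monic_left hf
    refine ⟨g, mem_monicsOfDegree.mpr ⟨hg, ?_⟩, rfl⟩
    rw [hQ.natDegree_mul hg, Nat.add_sub_cancel_left]
  · exact fun g hg ↦ (hlam.map_mul hQ (mem_monicsOfDegree.mp hg).1).symm

theorem natCast_mul_lCoeff {lam : F[X] → R} (hlam : IsMultiplicativeOnMonic lam) (k : ℕ) :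
    k * lCoeff lam k = ∑ j ∈ Finset.Icc 1 k, lPowerSum lam j * lCoeff lam (k - j) := by
  classical
  calc k * lCoeff lam k
      = ∑ f ∈ monicsOfDegree F k, ∑ j ∈ Finset.Icc 1 k,
          ∑ x ∈ primePowersOfDegree F j, if x.1 ^ x.2 ∣ f then x.1.natDegree * lam f else 0 := by
        rw [lCoeff, Finset.mul_sum]
        refine Finset.sum_congr rfl fun f hf ↦ ?_
        obtain ⟨hmonic, rfl⟩ := mem_monicsOfDegree.mp hf
        conv_lhs => rw [natDegree_eq_sum_primePowersOfDegree hmonic]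
        simp_rw [Nat.cast_sum, Finset.sum_mul, Finset.sum_filter]
    _ = ∑ j ∈ Finset.Icc 1 k, ∑ x ∈ primePowersOfDegree F j,
          x.1.natDegree * ∑ f ∈ monicsOfDegree F k with x.1 ^ x.2 ∣ f, lam f := by
        rw [Finset.sum_comm]
        refine Finset.sum_congr rfl fun j _ ↦ ?_
        rw [Finset.sum_comm]
        simp_rw [Finset.mul_sum, Finset.sum_filter]
    _ = ∑ j ∈ Finset.Icc 1 k, lPowerSum lam j * lCoeff lam (k - j) := by
        refine Finset.sum_congr rfl fun j hj ↦ ?_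
        rw [lPowerSum, Finset.sum_mul]
        refine Finset.sum_congr rfl fun x hx ↦ ?_
        obtain ⟨hP, -, -, rfl⟩ := mem_primePowersOfDegree.mp hx
        rw [← natDegree_pow] at hj ⊢
        rw [sum_monicsOfDegree_filter_dvd hlam (hP.pow _) (Finset.mem_Icc.mp hj).2, hlam.map_pow hP,
          mul_assoc]

lemma card_filter_minpoly_eq {F E : Type*} [Field F] [Finite F] [Field E] [Fintype E]
    [Algebra F E] {P : F[X]} [DecidablePred fun t : E ↦ minpoly F t = P] (hP : P.Monic)
    (hirr : Irreducible P) (hdvd : P.natDegree ∣ Module.finrank F E) :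
    (Finset.univ.filter fun t : E ↦ minpoly F t = P).card = P.natDegree := by
  have : Fintype F := .ofFinite F
  have hdvd : P ∣ X ^ Fintype.card E - X := by
    rw [Module.card_eq_pow_finrank (K := F), ← Nat.card_eq_fintype_card]
    exact hirr.natDegree_dvd_iff_dvd_X_pow_card_pow_sub_X.mp hdvd
  have hsplits : (P.map (algebraMap F E)).Splits :=
    (FiniteField.isSplittingField_sub E F).splits.of_dvd
      (map_ne_zero (FiniteField.X_pow_card_sub_X_ne_zero F Fintype.one_lt_card))
      (Polynomial.map_dvd _ hdvd)
  rw [← card_rootSet_eq_natDegree (PerfectField.separable_of_irreducible hirr) hsplits,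
    ← Set.toFinset_card]
  congr 1
  ext t
  rw [Finset.mem_filter_univ, Set.mem_toFinset, mem_rootSet_of_ne hP.ne_zero]
  exact ⟨fun h ↦ h ▸ minpoly.aeval F t,
    fun h ↦ (minpoly.eq_of_irreducible_of_monic hirr h hP).symm⟩

theorem sum_minpoly_eq_lPowerSum {E : Type*} [Field E] [Fintype E] [Algebra F E] (lam : F[X] → R) :
    ∑ t : E, lam (minpoly F t) ^ (Module.finrank F E / (minpoly F t).natDegree) =
      lPowerSum lam (Module.finrank F E) := by
  classical
  set n := Module.finrank F E
  have dvd (t : E) : (minpoly F t).natDegree ∣ n := minpoly.degree_dvd (.of_finite F t)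
  have mem (t : E) :
      (minpoly F t, n / (minpoly F t).natDegree) ∈ primePowersOfDegree F n := by
    have ht := IsIntegral.of_finite F t
    exact mem_primePowersOfDegree.mpr ⟨minpoly.monic ht, minpoly.irreducible ht,
      Nat.div_pos (Nat.le_of_dvd Module.finrank_pos (dvd t)) (minpoly.natDegree_pos ht),
      Nat.div_mul_cancel (dvd t)⟩
  rw [← Finset.sum_fiberwise_of_maps_to fun t _ ↦ mem t, lPowerSum]
  refine Finset.sum_congr rfl fun ⟨P, e⟩ hx ↦ ?_
  obtain ⟨hP, hirr, -, hdeg⟩ := mem_primePowersOfDegree.mp hx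
  dsimp only at hP hirr hdeg
  have fiber_eq (t : E) :
      (minpoly F t, n / (minpoly F t).natDegree) = (P, e) ↔ minpoly F t = P := by
    refine ⟨fun h ↦ congrArg Prod.fst h, ?_⟩
    rintro rfl
    rw [← hdeg, Nat.mul_div_cancel _ hirr.natDegree_pos]
  calc _ = ∑ t : E with minpoly F t = P, lam P ^ e := by
        refine Finset.sum_congr (Finset.filter_congr fun t _ ↦ fiber_eq t) fun t ht ↦ ?_
        rw [(Finset.mem_filter.mp ht).2, ← hdeg, Nat.mul_div_cancel _ hirr.natDegree_pos]
    _ = P.natDegree * lam P ^ e := by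
        rw [Finset.sum_const, card_filter_minpoly_eq hP hirr ⟨e, by rw [mul_comm]; exact hdeg.symm⟩,
          nsmul_eq_mul]

end EulerProduct

section CharacterLFunction

variable {F R : Type*} [Field F] [CommRing R]

/-- The multiplicative function `f ↦ χ (f(-a)) χ⁻¹ (f(0)) ψ (sum of the roots of f)` on monic
polynomials, whose L-function encodes the sums `∑ t, χ (t + a) χ⁻¹ (t) ψ (t)` over all
extensions. -/
def mixedCharPolynomial (χ : MulChar F R) (ψ : AddChar F R) (a : F) (f : F[X]) : R :=
  χ (f.eval (-a)) * χ⁻¹ (f.eval 0) * ψ (-f.nextCoeff)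

lemma isMultiplicativeOnMonic_mixedCharPolynomial (χ : MulChar F R) (ψ : AddChar F R) (a : F) :
    IsMultiplicativeOnMonic (mixedCharPolynomial χ ψ a) where
  map_one := by simp [mixedCharPolynomial, nextCoeff]
  map_mul hf hg := by
    simp only [mixedCharPolynomial, eval_mul, map_mul, hf.nextCoeff_mul hg, neg_add,
      AddChar.map_add_eq_mul]
    ring

lemma lCoeff_mixedCharPolynomial_eq_zero [Finite F] [IsDomain R] (χ : MulChar F R)
    {ψ : AddChar F R} (hψ : ψ ≠ 1) (a : F) {k : ℕ} (hk : 3 ≤ k) :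
    lCoeff (mixedCharPolynomial χ ψ a) k = 0 := by
  obtain ⟨b, hb⟩ := AddChar.ne_one_iff.mp hψ
  set h : F[X] := C (-b) * X ^ (k - 2) * (X + C a) with h_def
  have natDegree_h : h.natDegree ≤ k - 1 := by
    rw [h_def]
    compute_degree
    omega
  have coeff_h : h.coeff (k - 1) = -b := by
    obtain ⟨i, rfl⟩ := Nat.exists_eq_add_of_le' hk
    simp [h, mul_add, mul_assoc, ← pow_succ, coeff_X_pow]
  have eval_h : h.eval 0 = 0 ∧ h.eval (-a) = 0 := by
    simp [h, show k - 2 ≠ 0 by omega]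
  refine lCoeff_eq_zero_of_add (h := h) ?_ hb fun f hf ↦ ?_
  · exact degree_le_of_natDegree_le natDegree_h |>.trans_lt (by exact_mod_cast (by omega))
  obtain ⟨-, rfl⟩ := mem_monicsOfDegree.mp hf
  have natDegree_add : (f + h).natDegree = f.natDegree :=
    natDegree_add_eq_left_of_natDegree_lt (by omega)
  have nextCoeff_add : (f + h).nextCoeff = f.nextCoeff - b := by
    rw [nextCoeff_of_natDegree_pos (by omega), nextCoeff_of_natDegree_pos (by omega),
      natDegree_add, coeff_add, coeff_h, sub_eq_add_neg]
  simp only [mixedCharPolynomial, eval_add, eval_h, add_zero, nextCoeff_add, neg_sub,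
    sub_eq_add_neg b, AddChar.map_add_eq_mul]
  ring

variable {E : Type*} [Field E] [Algebra F E] [FiniteDimensional F E]

open IntermediateField in
lemma finrank_adjoin_simple_eq (t : E) :
    Module.finrank F⟮t⟯ E = Module.finrank F E / (minpoly F t).natDegree := by
  rw [← Module.finrank_mul_finrank F F⟮t⟯ E, adjoin.finrank (.of_finite F t),
    Nat.mul_div_cancel_left _ (minpoly.natDegree_pos (.of_finite F t))]

open IntermediateField in
lemma norm_eq_eval_minpoly_pow (t : E) :
    Algebra.norm F t = (-1) ^ Module.finrank F E *
      (minpoly F t).eval 0 ^ (Module.finrank F E / (minpoly F t).natDegree) := by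
  have ht := IsIntegral.of_finite F t
  have norm_gen := Algebra.PowerBasis.norm_gen_eq_coeff_zero_minpoly (adjoin.powerBasis ht)
  rw [adjoin.powerBasis_gen ht, adjoin.powerBasis_dim, minpoly_gen] at norm_gen
  rw [Algebra.norm_eq_norm_adjoin F t, norm_gen, finrank_adjoin_simple_eq, mul_pow, ← pow_mul,
    Nat.mul_div_cancel' (minpoly.degree_dvd ht), coeff_zero_eq_eval_zero]

lemma mixedCharPolynomial_minpoly_pow (χ : MulChar F R) (ψ : AddChar F R) (a : F) (t : E) :
    mixedCharPolynomial χ ψ a (minpoly F t) ^ (Module.finrank F E / (minpoly F t).natDegree) =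
      χ (Algebra.norm F (t + algebraMap F E a)) * χ⁻¹ (Algebra.norm F t) *
        ψ (Algebra.trace F E t) := by
  have sign : χ ((-1) ^ Module.finrank F E) * χ⁻¹ ((-1) ^ Module.finrank F E) = 1 := by
    rw [← MulChar.mul_apply, mul_inv_cancel, MulChar.one_apply (by simp)]
  rw [norm_eq_eval_minpoly_pow, norm_eq_eval_minpoly_pow, trace_eq_finrank_mul_minpoly_nextCoeff,
    finrank_adjoin_simple_eq, minpoly.add_algebraMap, natDegree_comp, natDegree_X_sub_C, mul_one,
    ← nsmul_eq_mul, AddChar.map_nsmul_eq_pow, mixedCharPolynomial]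
  simp only [eval_comp, eval_sub, eval_X, eval_C, zero_sub, map_mul, map_pow, mul_pow] at sign ⊢
  generalize Module.finrank F E / (minpoly F t).natDegree = e
  linear_combination (-(χ ((minpoly F t).eval (-a)) ^ e * χ⁻¹ ((minpoly F t).eval 0) ^ e *
    ψ (-(minpoly F t).nextCoeff) ^ e)) * sign

end CharacterLFunction

section WeilBound

lemma exists_eq_neg_pow_add_pow {K : Type*} [Field K] [IsAlgClosed K] {L S : ℕ → K} (h0 : L 0 = 1)
    (h3 : ∀ k, 3 ≤ k → L k = 0)
    (newton : ∀ k : ℕ, k * L k = ∑ j ∈ Finset.Icc 1 k, S j * L (k - j)) :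
    ∃ α β, ∀ k, 1 ≤ k → S k = -(α ^ k + β ^ k) := by
  obtain ⟨α, hα⟩ : ∃ α, α ^ 2 + L 1 * α + L 2 = 0 := by
    obtain ⟨α, hα⟩ := IsAlgClosed.exists_root (C 1 * X ^ 2 + C (L 1) * X + C (L 2))
      (by rw [degree_quadratic one_ne_zero]; decide)
    exact ⟨α, by simpa using hα⟩
  obtain ⟨β, hβ⟩ : ∃ β, L 1 = -(α + β) := ⟨-L 1 - α, by ring⟩
  have h2 : L 2 = α * β := by linear_combination hα - α * hβ
  refine ⟨α, β, fun k hk ↦ ?_⟩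
  have S1 : S 1 = -(α + β) := by
    simpa [h0, hβ] using (newton 1).symm
  have S2 : S 2 = -(α ^ 2 + β ^ 2) := by
    have newton_two : 2 * (α * β) = S 1 * L 1 + S 2 := by
      simpa [Finset.sum_Icc_succ_top, h0, h2] using newton 2
    linear_combination S1 * (α + β) - S 1 * hβ - newton_two
  have recurrence (k : ℕ) : S (k + 3) = (α + β) * S (k + 2) - α * β * S (k + 1) := by
    have newton_sum := newton (k + 3)
    rw [h3 _ (by omega), Finset.sum_Icc_succ_top (by omega), Finset.sum_Icc_succ_top (by omega),
      Finset.sum_Icc_succ_top (by omega), Finset.sum_eq_zero fun j hj ↦ by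
        rw [h3 _ (by have := Finset.mem_Icc.mp hj; omega), mul_zero],
      show k + 3 - (k + 1) = 2 by omega, show k + 3 - (k + 1 + 1) = 1 by omega,
      show k + 3 - (k + 2 + 1) = 0 by omega, h0, h2, hβ] at newton_sum
    linear_combination -newton_sum
  induction k using Nat.strong_induction_on with
  | _ k ih =>
    match k, hk with
    | 1, _ => simpa using S1
    | 2, _ => exact S2
    | k + 3, _ =>
      rw [recurrence, ih (k + 2) (by omega) (by omega), ih (k + 1) (by omega) (by omega)]
      ring

lemma le_of_forall_mul_pow_le {x q c K : ℝ} (hq : 0 < q) (hc : 0 < c)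
    (h : ∀ i : ℕ, 1 ≤ i → c * x ^ i ≤ K * q ^ i) : x ≤ q := by
  by_contra! hx
  obtain ⟨i, hi⟩ := pow_unbounded_of_one_lt (K / c) ((one_lt_div hq).mpr hx)
  have hpow : (x / q) ^ i ≤ (x / q) ^ (i + 1) :=
    pow_le_pow_right₀ ((one_lt_div hq).mpr hx).le i.le_succ
  have := hi.trans_le hpow
  rw [div_pow, div_lt_div_iff₀ hc (by positivity)] at this
  linarith [h (i + 1) (by omega)]

lemma norm_le_of_forall_norm_pow_add_pow_le {u v : ℂ} {K q : ℝ} (hq : 0 < q)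
    (h : ∀ i : ℕ, 1 ≤ i → ‖u ^ i + v ^ i‖ ≤ K * q ^ i) : ‖u‖ ≤ q := by
  rcases eq_or_ne u v with rfl | huv
  · refine le_of_forall_mul_pow_le (K := K) hq two_pos fun i hi ↦ ?_
    simpa [← two_mul] using h i hi
  · refine le_of_forall_mul_pow_le (K := K * q + ‖v‖ * K) hq
      (norm_pos_iff.mpr (sub_ne_zero.mpr huv)) fun i hi ↦ ?_
    calc ‖u - v‖ * ‖u‖ ^ i = ‖(u ^ (i + 1) + v ^ (i + 1)) - v * (u ^ i + v ^ i)‖ := by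
          rw [← norm_pow, ← norm_mul]
          ring_nf
      _ ≤ K * q ^ (i + 1) + ‖v‖ * (K * q ^ i) := by
          refine (norm_sub_le _ _).trans (add_le_add (h _ (by omega)) ?_)
          rw [norm_mul]
          gcongr
          exact h i hi
      _ = (K * q + ‖v‖ * K) * q ^ i := by ring

variable {F R : Type*} [Field F] [CommRing R]

/-- The lift `χ ∘ N` of a multiplicative character to a finite extension `E` of its field. -/
def mulCharNormLift (E : Type*) [Field E] [Algebra F E] (χ : MulChar F R) : MulChar E R :=
  MulChar.ofUnitHom (χ.toUnitHom.comp (Units.map (Algebra.norm F)))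

section

variable {E : Type*} [Field E] [Algebra F E]

lemma mulCharNormLift_apply [FiniteDimensional F E] (χ : MulChar F R) (t : E) :
    mulCharNormLift E χ t = χ (Algebra.norm F t) := by
  rcases eq_or_ne t 0 with rfl | ht
  · rw [Algebra.norm_zero, MulChar.map_zero, MulChar.map_zero]
  · obtain ⟨t, rfl⟩ := ht.isUnit
    simp [mulCharNormLift]

lemma mulCharNormLift_inv (χ : MulChar F R) :
    mulCharNormLift E χ⁻¹ = (mulCharNormLift E χ)⁻¹ := by
  refine (inv_eq_of_mul_eq_one_right (MulChar.ext fun t ↦ ?_)).symm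
  simp [mulCharNormLift, ← MulChar.mul_apply, MulChar.one_apply (t.isUnit.map (Algebra.norm F))]

lemma mulCharNormLift_pow_eq_one [Fintype F] (χ : MulChar F R) :
    mulCharNormLift E χ ^ (Fintype.card F - 1) = 1 := by
  classical
  ext t
  rw [MulChar.pow_apply_coe, MulChar.one_apply_coe, mulCharNormLift, MulChar.ofUnitHom_coe,
    ← Units.val_pow_eq_pow_val, MonoidHom.comp_apply, ← map_pow, ← Fintype.card_units,
    pow_card_eq_one, map_one, Units.val_one]

end

lemma sum_norm_trace_eq_lPowerSum [Finite F] [IsDomain R] (χ : MulChar F R) (ψ : AddChar F R)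
    (a : F) {E : Type*} [Field E] [Algebra F E] [Fintype E] :
    ∑ t : E, χ (Algebra.norm F (t + algebraMap F E a)) * χ⁻¹ (Algebra.norm F t) *
      ψ (Algebra.trace F E t) = lPowerSum (mixedCharPolynomial χ ψ a) (Module.finrank F E) := by
  rw [← sum_minpoly_eq_lPowerSum (E := E)]
  exact Finset.sum_congr rfl fun t _ ↦ (mixedCharPolynomial_minpoly_pow χ ψ a t).symm

variable [Fintype F]

lemma norm_sum_norm_trace_le [CharP F 2] (χ : MulChar F ℂ) {ψ : AddChar F ℂ} (hψ : ψ ≠ 1) {a : F}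
    (ha : a ≠ 0) {E : Type*} [Field E] [Algebra F E] [Fintype E] {m : ℕ}
    (hcard : Fintype.card E = 2 ^ m * 2 ^ m) :
    ‖∑ t : E, χ (Algebra.norm F (t + algebraMap F E a)) * χ⁻¹ (Algebra.norm F t) *
      ψ (Algebra.trace F E t)‖ ≤ 6 * (Fintype.card F - 1 : ℕ) * 2 ^ m + 2 := by
  have : CharP E 2 := charP_of_injective_algebraMap (algebraMap F E).injective 2
  have hodd : Odd (Fintype.card F - 1) :=
    Nat.Even.sub_odd Fintype.card_pos
      (Nat.even_iff.mpr (FiniteField.even_card_of_char_two (ringChar.eq F 2))) odd_one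
  let ψE : AddChar E ℂ := ψ.compAddMonoidHom (Algebra.trace F E).toAddMonoidHom
  have hψE : ψE ≠ 1 := by
    obtain ⟨x, hx⟩ := AddChar.ne_one_iff.mp hψ
    obtain ⟨t, rfl⟩ := Algebra.trace_surjective F E x
    exact AddChar.ne_one_iff.mpr ⟨t, hx⟩
  simpa only [← mulCharNormLift_inv, mulCharNormLift_apply, ψE,
    AddChar.compAddMonoidHom_apply, LinearMap.toAddMonoidHom_coe] using
    norm_sum_mulChar_mul_addChar_le hcard hodd (mulCharNormLift_pow_eq_one χ) hψE
      ((map_ne_zero (algebraMap F E)).mpr ha)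

variable [CharP F 2]

lemma norm_lPowerSum_two_mul_le (χ : MulChar F ℂ) {ψ : AddChar F ℂ} (hψ : ψ ≠ 1) {a : F}
    (ha : a ≠ 0) {i : ℕ} (hi : 1 ≤ i) :
    ‖lPowerSum (mixedCharPolynomial χ ψ a) (2 * i)‖ ≤
      (6 * (Fintype.card F - 1 : ℕ) + 2) * (Fintype.card F : ℝ) ^ i := by
  have : Fact (Nat.Prime 2) := ⟨Nat.prime_two⟩
  have : NeZero (2 * i) := ⟨by omega⟩
  obtain ⟨n, -, hn⟩ := FiniteField.card F 2
  let E := FiniteField.Extension F 2 (2 * i)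
  let _ : Fintype E := .ofFinite E
  have finrank_eq : Module.finrank F E = 2 * i := FiniteField.finrank_extension F 2 (2 * i)
  have hcard : Fintype.card E = 2 ^ (n * i : ℕ) * 2 ^ (n * i : ℕ) := by
    rw [Module.card_eq_pow_finrank (K := F), finrank_eq, ← pow_add, ← two_mul, mul_left_comm,
      pow_mul _ (n : ℕ), ← hn]
  have hpow : (2 : ℝ) ^ (n * i : ℕ) = (Fintype.card F : ℝ) ^ i := by
    rw [hn, pow_mul, Nat.cast_pow, Nat.cast_ofNat]
  have one_le : (1 : ℝ) ≤ (Fintype.card F : ℝ) ^ i :=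
    one_le_pow₀ (by exact_mod_cast Fintype.card_pos)
  have bound := norm_sum_norm_trace_le χ hψ ha hcard
  rw [sum_norm_trace_eq_lPowerSum, finrank_eq, hpow] at bound
  linarith

theorem norm_sum_mulChar_mul_addChar_sq_le (χ : MulChar F ℂ) {ψ : AddChar F ℂ} (hψ : ψ ≠ 1)
    {a : F} (ha : a ≠ 0) : ‖∑ t, χ (t + a) * χ⁻¹ t * ψ t‖ ^ 2 ≤ 4 * Fintype.card F := by
  obtain ⟨α, β, powerSum_eq⟩ := exists_eq_neg_pow_add_pow
    (lCoeff_zero (isMultiplicativeOnMonic_mixedCharPolynomial χ ψ a))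
    (fun _ ↦ lCoeff_mixedCharPolynomial_eq_zero χ hψ a)
    (natCast_mul_lCoeff (isMultiplicativeOnMonic_mixedCharPolynomial χ ψ a))
  have even_bound (i : ℕ) (hi : 1 ≤ i) : ‖(α ^ 2) ^ i + (β ^ 2) ^ i‖ ≤
      (6 * (Fintype.card F - 1 : ℕ) + 2) * (Fintype.card F : ℝ) ^ i := by
    rw [← pow_mul, ← pow_mul, ← norm_neg, ← powerSum_eq _ (by omega)]
    exact norm_lPowerSum_two_mul_le χ hψ ha hi
  have hq : (0 : ℝ) < Fintype.card F := Nat.cast_pos.mpr Fintype.card_pos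
  have hα := norm_le_of_forall_norm_pow_add_pow_le hq even_bound
  have hβ := norm_le_of_forall_norm_pow_add_pow_le hq fun i hi ↦ by
    rw [add_comm]; exact even_bound i hi
  have sum_eq : ∑ t, χ (t + a) * χ⁻¹ t * ψ t = -(α + β) := by
    simpa [powerSum_eq] using sum_norm_trace_eq_lPowerSum χ ψ a (E := F)
  rw [norm_pow] at hα hβ
  rw [sum_eq, norm_neg]
  calc ‖α + β‖ ^ 2 ≤ (‖α‖ + ‖β‖) ^ 2 := by gcongr; exact norm_add_le α β
    _ ≤ 2 * (‖α‖ ^ 2 + ‖β‖ ^ 2) := add_sq_le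
    _ ≤ 4 * Fintype.card F := by linarith

end WeilBound

section Correlation

lemma sum_mulChar_add_mul_inv {F R : Type*} [Field F] [Fintype F] [CommRing R] [IsDomain R]
    {χ : MulChar F R} (hχ : χ ≠ 1) {a : F} (ha : a ≠ 0) : ∑ z, χ (z + a) * χ⁻¹ z = -1 := by
  classical
  have mul_inv_apply {b : F} (hb : b ≠ 0) : χ b * χ⁻¹ b = 1 := by
    rw [← MulChar.mul_apply, mul_inv_cancel, MulChar.one_apply hb.isUnit]
  calc ∑ z, χ (z + a) * χ⁻¹ z
      = ∑ t, χ (-a * (1 - t) + a) * χ⁻¹ (-a * (1 - t)) :=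
        (((Equiv.subLeft 1).trans (Equiv.mulLeft₀ (-a) (neg_ne_zero.mpr ha))).sum_comp
          fun z ↦ χ (z + a) * χ⁻¹ z).symm
    _ = χ⁻¹ (-1) * jacobiSum χ χ⁻¹ := by
        rw [jacobiSum, Finset.mul_sum]
        refine Finset.sum_congr rfl fun t _ ↦ ?_
        rw [show -a * (1 - t) + a = a * t by ring, show -a * (1 - t) = -1 * a * (1 - t) by ring]
        simp only [map_mul]
        linear_combination χ t * χ⁻¹ (-1) * χ⁻¹ (1 - t) * mul_inv_apply ha
    _ = -1 := by
        rw [jacobiSum_nontrivial_inv hχ]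
        linear_combination -mul_inv_apply (neg_ne_zero.mpr one_ne_zero)

theorem norm_sum_mulChar_add_mul_conj_mul_addChar_sq_le {F : Type*} [Field F] [Fintype F]
    [CharP F 2] {χ : MulChar F ℂ} (hχ : χ ≠ 1) (ψ : AddChar F ℂ) {a : F} (ha : a ≠ 0) :
    ‖∑ z, χ (z + a) * starRingEnd ℂ (χ z) * ψ z‖ ^ 2 ≤ 4 * Fintype.card F := by
  have conj_eq (z : F) : starRingEnd ℂ (χ z) = χ⁻¹ z := MulChar.star_apply' χ z
  simp only [conj_eq]
  rcases eq_or_ne ψ 1 with rfl | hψ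
  · simp only [AddChar.one_apply, mul_one, sum_mulChar_add_mul_inv hχ ha, norm_neg, norm_one,
      one_pow]
    have : (1 : ℝ) ≤ Fintype.card F := by exact_mod_cast Fintype.card_pos
    linarith
  · exact norm_sum_mulChar_mul_addChar_sq_le χ hψ ha

lemma sum_norm_sum_mul_addChar_sq {G : Type*} [AddCommGroup G] [Fintype G] (h : G → ℂ) :
    ∑ e : AddChar G ℂ, ‖∑ x, h x * e x‖ ^ 2 = Fintype.card G * ∑ x, ‖h x‖ ^ 2 := by
  classical
  have expand (e : AddChar G ℂ) : (‖∑ x, h x * e x‖ : ℂ) ^ 2 =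
      ∑ x, ∑ y, h x * starRingEnd ℂ (h y) * e (x - y) := by
    rw [← Complex.mul_conj', map_sum, Finset.sum_mul_sum]
    refine Finset.sum_congr rfl fun x _ ↦ Finset.sum_congr rfl fun y _ ↦ ?_
    rw [map_mul, sub_eq_add_neg, AddChar.map_add_eq_mul, AddChar.map_neg_eq_conj]
    ring
  have orthogonality (x y : G) :
      ∑ e : AddChar G ℂ, e (x - y) = if x = y then (Fintype.card G : ℂ) else 0 := by
    simp only [AddChar.sum_apply_eq_ite, sub_eq_zero]
  apply Complex.ofReal_injective
  push_cast
  simp_rw [expand]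
  rw [Finset.sum_comm]
  simp_rw [Finset.sum_comm (s := (Finset.univ : Finset (AddChar G ℂ))), ← Finset.mul_sum,
    orthogonality, mul_ite, mul_zero, Finset.sum_ite_eq, Finset.mem_univ, if_true,
    Complex.mul_conj', Finset.mul_sum, mul_comm]

/- The shift `a = 0` contributes at most `|G| |Y|²`; by Parseval, each of the other `|G| - 1` shifts
contributes the mean over the characters `e` of quantities bounded by `C`. -/
lemma sum_norm_sum_mul_conj_sq_le {G Y : Type*} [AddCommGroup G] [Fintype G] [Fintype Y]
    {f : G → Y → ℂ} (hf : ∀ x y, ‖f x y‖ ≤ 1) {C : ℝ}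
    (correlation_le : ∀ a ≠ 0, ∀ e : AddChar G ℂ,
      ‖∑ x, (∑ y, f (x + a) y * starRingEnd ℂ (f x y)) * e x‖ ^ 2 ≤ C) :
    ∑ x, ∑ x', ‖∑ y, f x y * starRingEnd ℂ (f x' y)‖ ^ 2 ≤
      Fintype.card G * (Fintype.card Y : ℝ) ^ 2 + (Fintype.card G - 1) * C := by
  classical
  let T (a x : G) : ℂ := ∑ y, f (x + a) y * starRingEnd ℂ (f x y)
  have zero_shift_le : ∑ x, ‖T 0 x‖ ^ 2 ≤ Fintype.card G * (Fintype.card Y : ℝ) ^ 2 := by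
    rw [← nsmul_eq_mul]
    refine Finset.sum_le_card_nsmul _ _ _ fun x _ ↦ ?_
    gcongr
    rw [← nsmul_one]
    refine norm_sum_le_of_le _ (fun y _ ↦ ?_) |>.trans (Finset.sum_const _).le
    rw [norm_mul, RCLike.norm_conj]
    exact mul_le_one₀ (hf _ _) (norm_nonneg _) (hf _ _)
  have shift_le (a : G) (ha : a ≠ 0) : ∑ x, ‖T a x‖ ^ 2 ≤ C := by
    have hG : (0 : ℝ) < Fintype.card G := Nat.cast_pos.mpr Fintype.card_pos
    refine le_of_mul_le_mul_left ?_ hG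
    rw [← sum_norm_sum_mul_addChar_sq, ← AddChar.card_eq (α := G), ← nsmul_eq_mul]
    exact Finset.sum_le_card_nsmul _ _ _ fun e _ ↦ correlation_le a ha e
  calc ∑ x, ∑ x', ‖∑ y, f x y * starRingEnd ℂ (f x' y)‖ ^ 2
      = ∑ a, ∑ x, ‖T a x‖ ^ 2 := by
        refine Finset.sum_comm.trans (.trans (Finset.sum_congr rfl fun x _ ↦ ?_) Finset.sum_comm)
        exact (Equiv.sum_comp (Equiv.addLeft x)
          fun x' ↦ ‖∑ y, f x' y * starRingEnd ℂ (f x y)‖ ^ 2).symm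
    _ = ∑ x, ‖T 0 x‖ ^ 2 + ∑ a ∈ Finset.univ.erase 0, ∑ x, ‖T a x‖ ^ 2 :=
        (Finset.add_sum_erase _ _ (Finset.mem_univ 0)).symm
    _ ≤ _ := by
        refine add_le_add zero_shift_le ?_
        refine (Finset.sum_le_card_nsmul _ _ C fun a ha ↦
          shift_le a (Finset.ne_of_mem_erase ha)).trans_eq ?_
        rw [Finset.card_erase_of_mem (Finset.mem_univ _), Finset.card_univ, nsmul_eq_mul,
          Nat.cast_pred Fintype.card_pos]

end Correlation

section Entropy

variable {m : Type*} [Fintype m] [DecidableEq m] {ρ : Matrix m m ℂ}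

lemma sum_eigenvalues_sq_eq (h : ρ.IsHermitian) :
    ∑ i, h.eigenvalues i ^ 2 = ∑ x, ∑ x', ‖ρ x x'‖ ^ 2 := by
  have trace_eq_eigenvalues : (ρ * ρ).trace = ∑ i, (h.eigenvalues i : ℂ) ^ 2 := by
    conv_lhs => rw [h.spectral_theorem]
    rw [← map_mul, Matrix.diagonal_mul_diagonal, Unitary.conjStarAlgAut_apply,
      Matrix.trace_mul_cycle, Unitary.coe_star_mul_self, one_mul, Matrix.trace_diagonal]
    exact Finset.sum_congr rfl fun i _ ↦ (sq _).symm
  have trace_eq_norm : (ρ * ρ).trace = ∑ x, ∑ x', (‖ρ x x'‖ : ℂ) ^ 2 := by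
    refine Finset.sum_congr rfl fun x _ ↦ Finset.sum_congr rfl fun x' _ ↦ ?_
    rw [← Complex.mul_conj']
    exact congrArg (ρ x x' * ·) (h.apply x' x).symm
  exact_mod_cast trace_eq_eigenvalues.symm.trans trace_eq_norm

lemma log_sub_le_sum_negMulLog {κ : Type*} [Fintype κ] {l : κ → ℝ} {d : ℝ} (hd : 0 < d)
    (h0 : ∀ i, 0 ≤ l i) (h1 : ∑ i, l i = 1) :
    Real.log d - (d * ∑ i, l i ^ 2 - 1) ≤ ∑ i, Real.negMulLog (l i) := by
  have pointwise (i : κ) : l i * Real.log d - (d * l i ^ 2 - l i) ≤ Real.negMulLog (l i) := by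
    rcases (h0 i).eq_or_lt with hi | hi
    · simp [← hi]
    · have log_le := Real.log_le_sub_one_of_pos (mul_pos hd hi)
      rw [Real.log_mul hd.ne' hi.ne'] at log_le
      rw [Real.negMulLog]
      linear_combination l i * log_le
  calc Real.log d - (d * ∑ i, l i ^ 2 - 1)
      = ∑ i, (l i * Real.log d - (d * l i ^ 2 - l i)) := by
        rw [Finset.sum_sub_distrib, Finset.sum_sub_distrib, ← Finset.sum_mul, ← Finset.mul_sum, h1,
          one_mul]
    _ ≤ ∑ i, Real.negMulLog (l i) := Finset.sum_le_sum fun i _ ↦ pointwise i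

open scoped ComplexOrder in
lemma log_sub_le_sum_negMulLog_eigenvalues (hρ : ρ.PosSemidef) (htrace : ρ.trace = 1) {d : ℝ}
    (hd : 0 < d) :
    Real.log d - (d * ∑ x, ∑ x', ‖ρ x x'‖ ^ 2 - 1) ≤
      ∑ i, Real.negMulLog (hρ.isHermitian.eigenvalues i) := by
  rw [← sum_eigenvalues_sq_eq hρ.isHermitian]
  refine log_sub_le_sum_negMulLog hd hρ.eigenvalues_nonneg ?_
  rw [hρ.isHermitian.trace_eq_sum_eigenvalues] at htrace
  apply Complex.ofReal_injective
  rw [Complex.ofReal_sum]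
  exact htrace

end Entropy

section ReducedDensityMatrix

variable {κ : Type*} [DecidableEq κ] (A : Finset κ)

lemma mergeCfg_add (x x' : {i // i ∈ A} → ZMod 2) (y : {i // i ∉ A} → ZMod 2) :
    mergeCfg A (x + x') y = mergeCfg A x y + mergeCfg A x' 0 := by
  ext i
  by_cases hi : i ∈ A <;> simp [mergeCfg, hi]

lemma mergeCfg_comp_val (x : {i // i ∈ A} → ZMod 2) (y : {i // i ∉ A} → ZMod 2) :
    mergeCfg A x y ∘ Subtype.val = x := by
  ext i
  simp [mergeCfg, i.2]

variable [Fintype κ]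

lemma sum_sum_mergeCfg {R : Type*} [AddCommMonoid R] (f : (κ → ZMod 2) → R) :
    ∑ x, ∑ y, f (mergeCfg A x y) = ∑ c, f c := by
  rw [← Fintype.sum_prod_type' (f := fun x y ↦ f (mergeCfg A x y))]
  exact (Equiv.piEquivPiSubtypeProd (· ∈ A) fun _ ↦ ZMod 2).symm.sum_comp f

lemma card_cfg_mul_card_cfg_compl :
    Fintype.card ({i // i ∈ A} → ZMod 2) * Fintype.card ({i // i ∉ A} → ZMod 2) =
      Fintype.card (κ → ZMod 2) := by
  rw [← Fintype.card_prod]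
  exact Fintype.card_congr (Equiv.piEquivPiSubtypeProd (· ∈ A) fun _ ↦ ZMod 2).symm

open scoped ComplexOrder in
lemma posSemidef_rdm (ψ : (κ → ZMod 2) → ℂ) : (rdm A ψ).PosSemidef :=
  Matrix.posSemidef_self_mul_conjTranspose (Matrix.of fun x y ↦ ψ (mergeCfg A x y))

lemma trace_rdm (ψ : (κ → ZMod 2) → ℂ) : (rdm A ψ).trace = (∑ c, ‖ψ c‖ ^ 2 : ℝ) := by
  push_cast
  simp_rw [← sum_sum_mergeCfg A, ← Complex.mul_conj']
  rfl

lemma norm_rdm_div_apply (ψ : (κ → ZMod 2) → ℂ) (c : ℂ) (x x' : {i // i ∈ A} → ZMod 2) :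
    ‖rdm A (fun k ↦ ψ k / c) x x'‖ = ‖rdm A ψ x x'‖ / ‖c‖ ^ 2 := by
  simp only [rdm, Matrix.of_apply, map_div₀, div_mul_div_comm, Complex.mul_conj', ← Finset.sum_div,
    norm_div, norm_pow, Complex.norm_real, norm_norm]

end ReducedDensityMatrix

section CharacterState

lemma norm_mulChar_apply {F : Type*} [Field F] [Finite F] (χ : MulChar F ℂ) {a : F} (ha : a ≠ 0) :
    ‖χ a‖ = 1 := by
  have := Fintype.ofFinite F
  refine Complex.norm_eq_one_of_pow_eq_one (n := Fintype.card F - 1) ?_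
    (Nat.sub_ne_zero_of_lt Fintype.one_lt_card)
  rw [← map_pow, FiniteField.pow_card_sub_one_eq_one a ha, map_one]

lemma norm_mulChar_apply_le {F : Type*} [Field F] [Finite F] (χ : MulChar F ℂ) (a : F) :
    ‖χ a‖ ≤ 1 := by
  rcases eq_or_ne a 0 with rfl | ha
  · simp only [MulChar.map_zero, norm_zero, zero_le_one]
  · exact (norm_mulChar_apply χ ha).le

variable {F : Type*} [Field F] [Fintype F]

lemma sum_norm_mulChar_sq (χ : MulChar F ℂ) : ∑ a, ‖χ a‖ ^ 2 = (Fintype.card F : ℝ) - 1 := by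
  classical
  rw [← Finset.sum_erase_add _ _ (Finset.mem_univ (0 : F)),
    Finset.sum_congr rfl fun a ha ↦ by rw [norm_mulChar_apply χ (Finset.ne_of_mem_erase ha)],
    MulChar.map_zero, Finset.sum_const, Finset.card_erase_of_mem (Finset.mem_univ _),
    Finset.card_univ, nsmul_eq_mul, Nat.cast_pred Fintype.card_pos]
  norm_num

variable {κ : Type*} [Fintype κ] [DecidableEq κ] (ι : (κ → ZMod 2) ≃+ F) (A : Finset κ)

lemma norm_sum_rdm_mulChar_mul_addChar_sq_le [CharP F 2] {χ : MulChar F ℂ} (hχ : χ ≠ 1)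
    {a : {i // i ∈ A} → ZMod 2} (ha : a ≠ 0) (e : AddChar ({i // i ∈ A} → ZMod 2) ℂ) :
    ‖∑ x, rdm A (fun c ↦ χ (ι c)) (x + a) x * e x‖ ^ 2 ≤ 4 * Fintype.card F := by
  let restrict : (κ → ZMod 2) →+ ({i // i ∈ A} → ZMod 2) :=
    (LinearMap.funLeft (ZMod 2) (ZMod 2) Subtype.val).toAddMonoidHom
  let ψ : AddChar F ℂ := e.compAddMonoidHom (restrict.comp ι.symm.toAddMonoidHom)
  have restrict_mergeCfg (x y) : restrict (mergeCfg A x y) = x := mergeCfg_comp_val A x y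
  have shift_ne_zero : ι (mergeCfg A a 0) ≠ 0 := by
    rw [ι.map_ne_zero_iff]
    intro h
    exact ha (by rw [← restrict_mergeCfg a 0, h, map_zero])
  convert norm_sum_mulChar_add_mul_conj_mul_addChar_sq_le hχ ψ shift_ne_zero using 3
  rw [← ι.toEquiv.sum_comp, ← sum_sum_mergeCfg A]
  refine Finset.sum_congr rfl fun x _ ↦ ?_
  rw [rdm, Matrix.of_apply, Finset.sum_mul]
  refine Finset.sum_congr rfl fun y _ ↦ ?_
  simp [ψ, restrict_mergeCfg, mergeCfg_add]

lemma two_pow_mul_sum_norm_rdm_mulChar_sq_le {χ : MulChar F ℂ} (hχ : χ ≠ 1) :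
    2 ^ A.card * ∑ x, ∑ x', ‖rdm A (fun c ↦ χ (ι c)) x x'‖ ^ 2 ≤
      (Fintype.card F : ℝ) ^ 2 + 4 * Fintype.card F * (2 ^ A.card) ^ 2 := by
  have : Fact (Nat.Prime 2) := ⟨Nat.prime_two⟩
  have card_F : Fintype.card F = 2 ^ Fintype.card κ := by
    rw [← Fintype.card_congr ι.toEquiv, Fintype.card_fun, ZMod.card]
  have : CharP F 2 := charP_of_card_eq_prime_pow card_F
  have card_A : (Fintype.card ({i // i ∈ A} → ZMod 2) : ℝ) = 2 ^ A.card := by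
    rw [Fintype.card_fun, ZMod.card, Fintype.card_coe, Nat.cast_pow, Nat.cast_ofNat]
  have card_mul : (2 : ℝ) ^ A.card * Fintype.card ({i // i ∉ A} → ZMod 2) = Fintype.card F := by
    rw [← card_A, ← Fintype.card_congr ι.toEquiv, ← card_cfg_mul_card_cfg_compl A, Nat.cast_mul]
  have bound := sum_norm_sum_mul_conj_sq_le
    (f := fun (x : {i // i ∈ A} → ZMod 2) (y : {i // i ∉ A} → ZMod 2) ↦ χ (ι (mergeCfg A x y)))
    (fun _ _ ↦ norm_mulChar_apply_le χ _)
    fun a ha e ↦ norm_sum_rdm_mulChar_mul_addChar_sq_le ι A hχ ha e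
  rw [card_A] at bound
  calc _ ≤ 2 ^ A.card * (2 ^ A.card * (Fintype.card ({i // i ∉ A} → ZMod 2) : ℝ) ^ 2 +
        (2 ^ A.card - 1) * (4 * Fintype.card F)) := by gcongr; exact bound
    _ = (Fintype.card F : ℝ) ^ 2 + 4 * Fintype.card F * (2 ^ A.card) ^ 2 -
        2 ^ A.card * (4 * Fintype.card F) := by rw [← card_mul]; ring
    _ ≤ _ := sub_le_self _ (by positivity)

lemma mul_div_sq_sub_one_le {Q d P : ℝ} (hQ : 4 ≤ Q) (hd : 1 ≤ d)
    (h : d * P ≤ Q ^ 2 + 4 * Q * d ^ 2) : d * (P / (Q - 1) ^ 2) - 1 ≤ 16 * d ^ 2 / Q := by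
  have hN : 0 < (Q - 1) ^ 2 := by nlinarith
  have hd2 : 1 ≤ d ^ 2 := one_le_pow₀ hd
  rw [← mul_div_assoc, div_sub_one hN.ne', div_le_div_iff₀ hN (by linarith)]
  calc (d * P - (Q - 1) ^ 2) * Q ≤ 6 * Q * d ^ 2 * Q := by gcongr; nlinarith
    _ = d ^ 2 * (6 * Q * Q) := by ring
    _ ≤ d ^ 2 * (16 * (Q - 1) ^ 2) := mul_le_mul_of_nonneg_left (by nlinarith) (sq_nonneg d)
    _ = 16 * d ^ 2 * (Q - 1) ^ 2 := by ring

theorem log_sub_le_entropy_rdm_mulChar {χ : MulChar F ℂ} (hχ : χ ≠ 1) (hF : 4 ≤ Fintype.card F)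
    (h : (rdm A fun c ↦ χ (ι c) / √(Fintype.card F - 1)).IsHermitian) :
    Real.log (2 ^ A.card) - 16 * (2 ^ A.card) ^ 2 / Fintype.card F ≤
      ∑ i, Real.negMulLog (h.eigenvalues i) := by
  have hF : (4 : ℝ) ≤ Fintype.card F := by exact_mod_cast hF
  have norm_sqrt_sq : ‖(√(Fintype.card F - 1) : ℂ)‖ ^ 2 = (Fintype.card F - 1 : ℝ) := by
    rw [Complex.norm_real, Real.norm_eq_abs, sq_abs, Real.sq_sqrt (by linarith)]
  have sum_norm_sq : ∑ c, ‖χ (ι c) / √(Fintype.card F - 1)‖ ^ 2 = 1 := by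
    simp_rw [norm_div, div_pow, norm_sqrt_sq, ← Finset.sum_div]
    rw [show ∑ c, ‖χ (ι c)‖ ^ 2 = Fintype.card F - 1 from
      (ι.toEquiv.sum_comp fun z ↦ ‖χ z‖ ^ 2).trans (sum_norm_mulChar_sq χ), div_self (by linarith)]
  have trace_eq_one : (rdm A fun c ↦ χ (ι c) / √(Fintype.card F - 1)).trace = 1 := by
    rw [trace_rdm, sum_norm_sq, Complex.ofReal_one]
  have entropy_ge := log_sub_le_sum_negMulLog_eigenvalues (posSemidef_rdm A _) trace_eq_one
    (pow_pos two_pos A.card)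
  have purity_le := mul_div_sq_sub_one_le hF (one_le_pow₀ one_le_two)
    (two_pow_mul_sum_norm_rdm_mulChar_sq_le ι A hχ)
  simp_rw [norm_rdm_div_apply, div_pow, norm_sqrt_sq, ← Finset.sum_div] at entropy_ge
  linarith

end CharacterState

section GeneratorPower

lemma eq_of_forall_apply_pow_eq {F R : Type*} [Field F] [Finite F] {g : Fˣ}
    (hg : ∀ x, x ∈ Subgroup.zpowers g) {f h : F → R} (h0 : f 0 = h 0)
    (hpow : ∀ j : ℕ, f (g ^ j : Fˣ) = h (g ^ j : Fˣ)) : f = h := by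
  ext x
  rcases eq_or_ne x 0 with rfl | hx
  · exact h0
  · obtain ⟨j, hj⟩ := mem_powers_iff_mem_zpowers.mpr (hg (Units.mk0 x hx))
    simpa only [hj, Units.val_mk0] using hpow j

lemma exists_mulChar_ne_one_apply_pow_eq_zpow {F R : Type*} [Field F] [Fintype F] [Field R] {g : Fˣ}
    (hg : ∀ x, x ∈ Subgroup.zpowers g) {ω : R} (hω : IsPrimitiveRoot ω (Fintype.card F - 1)) {q : ℤ}
    (hq : ¬ ((Fintype.card F - 1 : ℕ) : ℤ) ∣ q) :
    ∃ χ : MulChar F R, χ ≠ 1 ∧ ∀ j : ℕ, χ (g ^ j : Fˣ) = ω ^ (q * j) := by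
  classical
  obtain ⟨ζ, rfl⟩ := hω.isUnit (Nat.sub_ne_zero_of_lt Fintype.one_lt_card)
  have hζ := IsPrimitiveRoot.coe_units_iff.mp hω
  have root : ζ ^ q ∈ rootsOfUnity (Fintype.card Fˣ) R := by
    rw [_root_.mem_rootsOfUnity, Fintype.card_units, ← zpow_natCast, zpow_comm, hζ.zpow_eq_one,
      one_zpow]
  have apply_g := MulChar.ofRootOfUnity_spec root hg
  refine ⟨MulChar.ofRootOfUnity root hg, fun h ↦ hq ?_, fun j ↦ ?_⟩
  · rw [h, MulChar.one_apply_coe, eq_comm, Units.val_eq_one] at apply_g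
    exact (hζ.zpow_eq_one_iff_dvd q).mp apply_g
  · rw [Units.val_pow_eq_pow_val, map_pow, apply_g, zpow_mul, zpow_natCast,
      Units.val_zpow_eq_zpow_val]

end GeneratorPower

/-- Every nontrivial chi state has near-maximal entanglement entropy on any
set of `ℓ` qubits: `S(ρ_A) ≥ ℓ ln 2 − 2^{4+2ℓ−n}`. -/
theorem lfsr_eigenstate_entanglement
    (n ℓ : ℕ) (hn : 2 ≤ n) (N : ℕ) (hN : N = 2 ^ n - 1)
    (F : Type*) [Field F] [Fintype F] [DecidableEq F]
    (hcard : Fintype.card F = 2 ^ n)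
    (g : Fˣ) (hg : ∀ x : Fˣ, x ∈ Subgroup.zpowers g)
    (ω : ℂ) (hω : ω = Complex.exp (2 * Real.pi * Complex.I / N))
    (ι : (Fin n → ZMod 2) ≃+ F)
    (q : ℤ) (hq : ¬ (N : ℤ) ∣ q)
    (ψq : F → ℂ)
    (hψq0 : ψq 0 = 0)
    (hψq : ∀ j : ℕ, ψq ((g ^ j : Fˣ) : F) = ω ^ (q * j) / Real.sqrt N)
    (A : Finset (Fin n)) (hA : A.card = ℓ) :
    ∀ hherm : (rdm A (fun x => ψq (ι x))).IsHermitian,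
      ∑ i, Real.negMulLog (hherm.eigenvalues i) ≥
        (ℓ : ℝ) * Real.log 2 - (2 : ℝ) ^ ((4 + 2 * (ℓ : ℝ)) - (n : ℝ)) := by
  intro hherm
  obtain rfl : N = Fintype.card F - 1 := by rw [hN, hcard]
  have four_le_card : 4 ≤ Fintype.card F := hcard ▸ Nat.pow_le_pow_right two_pos hn
  have hω : IsPrimitiveRoot ω (Fintype.card F - 1) :=
    hω ▸ Complex.isPrimitiveRoot_exp _ (by omega)
  obtain ⟨χ, hχ, apply_pow⟩ := exists_mulChar_ne_one_apply_pow_eq_zpow hg hω hq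
  obtain rfl : ψq = fun x ↦ χ x / √(Fintype.card F - 1) :=
    eq_of_forall_apply_pow_eq hg (by rw [hψq0, MulChar.map_zero, zero_div]) fun j ↦ by
      rw [hψq, apply_pow, Nat.cast_pred Fintype.card_pos]
  have error_eq : (2 : ℝ) ^ ((4 + 2 * (ℓ : ℝ)) - (n : ℝ)) = 16 * (2 ^ ℓ) ^ 2 / Fintype.card F := by
    rw [hcard, Real.rpow_sub two_pos, show 4 + 2 * (ℓ : ℝ) = (4 + 2 * ℓ : ℕ) by push_cast; rfl,
      Real.rpow_natCast, Real.rpow_natCast]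
    push_cast
    ring
  rw [error_eq, ← Real.log_pow, ← hA]
  exact log_sub_le_entropy_rdm_mulChar ι A hχ four_le_card hherm
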